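/- arXiv:1908.01149 — 5 statements merged into one kernel-verified Lean document; each statement's English description precedes it below -/
import Mathlib

section
/- Let (X,d) be a compact metric space and f : X → X a continuous map such that (X,f) has the approximate product property. If (X,f) admits at least two distinct ergodic f-invariant Borel probability measures, then the topological entropy of (X,f) is strictly positive. -/
open MeasureTheory Filter Set

section Defs

variable {X : Type*} [MetricSpace X]

/-- `segStart m t k` is the time `s_k` at which the `k`-th orbit segment starts
(indexing from `k = 0`): `s_0 = 0`, `s_{k+1} = s_k + m_k + t_k - 1`. -/
def segStart (m t : ℕ → ℕ) (k : ℕ) : ℕ :=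
  ∑ i ∈ Finset.range k, (m i + t i - 1)

/-- `(δ, ε)`-tracing of the sequence of orbit segments `(C k, m k)` with gaps `t k`
by the point `z`. -/
def Traced (f : X → X) (C : ℕ → X) (m t : ℕ → ℕ) (δ ε : ℝ) (z : X) : Prop :=
  ∀ k : ℕ,
    (((Finset.range (m k)).filter
      (fun j => ε < dist (f^[segStart m t k + j] z) (f^[j] (C k)))).card : ℝ)
      ≤ δ * (m k)

/-- The approximate product property. -/
def ApproxProduct (f : X → X) : Prop :=
  ∀ δ₁ δ₂ ε : ℝ, 0 < δ₁ → 0 < δ₂ → 0 < ε →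
    ∃ M : ℕ, ∀ n : ℕ, M < n → ∀ C : ℕ → X,
      ∃ t : ℕ → ℕ, (∀ k, 0 < t k) ∧ (∀ k, (t k : ℝ) ≤ 1 + δ₁ * n) ∧
        ∃ z : X, Traced f C (fun _ => n) t δ₂ ε z

/-- The strict approximate product property. -/
def StrictApproxProduct (f : X → X) : Prop :=
  ∀ δ ε : ℝ, 0 < δ → 0 < ε →
    ∃ M : ℕ, ∀ n : ℕ, M < n → ∀ C : ℕ → X,
      ∃ t : ℕ → ℕ, (∀ k, 0 < t k) ∧ (∀ k, (t k : ℝ) ≤ 1 + δ * n) ∧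
        ∃ z : X, Traced f C (fun _ => n) t 0 ε z

/-- Maximal cardinality of an `(n, ε)`-separated subset of `K`. -/
noncomputable def sepNum (f : X → X) (K : Set X) (n : ℕ) (ε : ℝ) : ℕ :=
  sSup {c : ℕ | ∃ S : Finset X, ↑S ⊆ K ∧ S.card = c ∧
    ∀ y ∈ S, ∀ y' ∈ S, y ≠ y' → ∃ j < n, ε < dist (f^[j] y) (f^[j] y')}

/-- Entropy of `f` on `K` at scale `ε`:
`h(K, f, ε) = limsup_n (1/n) log s(K, n, ε)`. -/
noncomputable def entScale (f : X → X) (K : Set X) (ε : ℝ) : EReal :=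
  limsup (fun n : ℕ => ((Real.log (sepNum f K n ε) / n : ℝ) : EReal)) atTop

/-- Bowen's topological entropy `h(f) = lim_{ε → 0} h(X, f, ε)`
(the limit is a supremum by monotonicity in `ε`). -/
noncomputable def topEnt (f : X → X) : EReal :=
  ⨆ (ε : ℝ) (_ : (0:ℝ) < ε), entScale f Set.univ ε

/-- Unique ergodicity: there is exactly one `f`-invariant Borel probability measure. -/
def UniquelyErgodic [MeasurableSpace X] (f : X → X) : Prop :=
  ∃! μ : Measure X, IsProbabilityMeasure μ ∧ Measure.map f μ = μ

/-- Minimality: every orbit is dense. -/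
def MinimalSystem (f : X → X) : Prop :=
  ∀ x : X, Dense (Set.range fun n => f^[n] x)


theorem aux_bddAbove {Y : Type*} [MetricSpace Y] [CompactSpace Y] (f : Y → Y) (hf : Continuous f)
    (n : ℕ) (ε : ℝ) (hε : 0 < ε) :
    BddAbove {c : ℕ | ∃ S : Finset Y, ↑S ⊆ (Set.univ : Set Y) ∧ S.card = c ∧
      ∀ y ∈ S, ∀ y' ∈ S, y ≠ y' → ∃ j < n, ε < dist (f^[j] y) (f^[j] y')} := by
  have hc : Continuous (fun p : Y => (fun j : Fin n => f^[j] p)) :=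
    continuous_pi fun j => hf.iterate _
  have hu := CompactSpace.uniformContinuous_of_continuous hc
  obtain ⟨r, hr, hru⟩ := Metric.uniformContinuous_iff.1 hu ε hε
  obtain ⟨T, hT, hcov⟩ := Metric.totallyBounded_iff.1 (isCompact_univ (X := Y)).totallyBounded
    (r / 2) (by positivity)
  have hex : ∀ p : Y, ∃ q ∈ T, dist p q < r / 2 := by
    intro p
    have := hcov (Set.mem_univ p)
    simpa using this
  choose c hcT hcd using hex
  refine ⟨hT.toFinset.card, ?_⟩
  rintro _ ⟨S, -, rfl, hS⟩
  refine Finset.card_le_card_of_injOn c (fun p _ => by simpa using hcT p) ?_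
  intro p hp q hq hpq
  by_contra hne
  obtain ⟨j, hj, hd⟩ := hS p hp q hq hne
  have h1 : dist p q < r := by
    have := dist_triangle_right p q (c p)
    have h2 := hcd p
    have h3 := hcd q
    rw [← hpq] at h3
    linarith
  have h2 := hru h1
  have h3 := (dist_le_pi_dist (fun j : Fin n => f^[j] p) (fun j : Fin n => f^[j] q) ⟨j, hj⟩)
  simp only at h3
  linarith

theorem aux_le_sepNum {Y : Type*} [MetricSpace Y] [CompactSpace Y] (f : Y → Y) (hf : Continuous f)
    (n : ℕ) (ε : ℝ) (hε : 0 < ε) {ι : Type*} (W : Finset ι) (z : ι → Y)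
    (h : ∀ a ∈ W, ∀ b ∈ W, a ≠ b → ∃ j < n, ε < dist (f^[j] (z a)) (f^[j] (z b))) :
    W.card ≤ sepNum f Set.univ n ε := by
  classical
  have hinj : Set.InjOn z W := by
    intro a ha b hb hab
    by_contra hne
    obtain ⟨j, _, hd⟩ := h a ha b hb hne
    rw [hab, dist_self] at hd
    linarith
  refine le_csSup (aux_bddAbove f hf n ε hε) ⟨W.image z, Set.subset_univ _,
    Finset.card_image_of_injOn hinj, ?_⟩
  intro y hy y' hy' hne
  obtain ⟨a, ha, rfl⟩ := Finset.mem_image.1 hy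
  obtain ⟨b, hb, rfl⟩ := Finset.mem_image.1 hy'
  exact h a ha b hb (fun hab => hne (by rw [hab]))

/-- Birkhoff sum. -/
noncomputable def bsum {Y : Type*} (f : Y → Y) (φ : Y → ℝ) (n : ℕ) (p : Y) : ℝ :=
  ∑ j ∈ Finset.range n, φ (f^[j] p)

theorem bsum_integral {Y : Type*} [MetricSpace Y] [CompactSpace Y] [MeasurableSpace Y]
    [BorelSpace Y] (f : Y → Y) (μ : Measure Y) [IsProbabilityMeasure μ]
    (hμ : MeasurePreserving f μ μ) (φ : Y → ℝ) (hφ : Continuous φ) (hf : Continuous f) (n : ℕ) :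
    Integrable (bsum f φ n) μ ∧ ∫ p, bsum f φ n p ∂μ = n * ∫ p, φ p ∂μ := by
  have hi : ∀ j, Integrable (fun p => φ (f^[j] p)) μ := fun j =>
    (hφ.comp (hf.iterate j)).integrable_of_hasCompactSupport (HasCompactSupport.of_compactSpace _)
  refine ⟨integrable_finsetSum _ fun j _ => hi j, ?_⟩
  unfold bsum
  rw [integral_finsetSum _ fun j _ => hi j]
  have : ∀ j, ∫ p, φ (f^[j] p) ∂μ = ∫ p, φ p ∂μ := by
    intro j
    have hm := hμ.iterate j
    conv_rhs => rw [← hm.map_eq]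
    rw [integral_map hm.measurable.aemeasurable hφ.aestronglyMeasurable]
  simp [this]

theorem bsum_trace {Y : Type*} [MetricSpace Y] (f : Y → Y) (φ : Y → ℝ) (B e ε δ : ℝ)
    (hB : ∀ p, |φ p| ≤ B) (he : 0 ≤ e) (hφ : ∀ p q, dist p q ≤ ε → |φ p - φ q| ≤ e)
    (n s : ℕ) (z x : Y)
    (h : (((Finset.range n).filter
      (fun j => ε < dist (f^[s + j] z) (f^[j] x))).card : ℝ) ≤ δ * n) :
    |bsum f φ n (f^[s] z) - bsum f φ n x| ≤ n * e + 2 * B * (δ * n) := by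
  have hB0 : 0 ≤ B := (abs_nonneg _).trans (hB x)
  unfold bsum
  rw [← Finset.sum_sub_distrib]
  refine (Finset.abs_sum_le_sum_abs _ _).trans ?_
  calc ∑ j ∈ Finset.range n, |φ (f^[j] (f^[s] z)) - φ (f^[j] x)|
      ≤ ∑ j ∈ Finset.range n, (e + if ε < dist (f^[s + j] z) (f^[j] x) then 2 * B else 0) := by
        refine Finset.sum_le_sum fun j _ => ?_
        have hj : f^[j] (f^[s] z) = f^[s + j] z := by
          rw [add_comm, Function.iterate_add_apply]
        rw [hj]
        split_ifs with hd
        · have h1 := hB (f^[s + j] z)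
          have h2 := hB (f^[j] x)
          rw [abs_le] at *
          constructor <;> linarith
        · simpa using hφ _ _ (not_lt.1 hd)
    _ = n * e + 2 * B * (((Finset.range n).filter
      (fun j => ε < dist (f^[s + j] z) (f^[j] x))).card : ℝ) := by
        rw [Finset.sum_add_distrib, ← Finset.sum_filter]
        simp
        ring
    _ ≤ _ := by gcongr

theorem bsum_shift_one {Y : Type*} (f : Y → Y) (φ : Y → ℝ) (B : ℝ)
    (hB : ∀ p, |φ p| ≤ B) (n : ℕ) (p : Y) :
    |bsum f φ n (f p) - bsum f φ n p| ≤ 2 * B := by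
  have h1 := Finset.sum_range_succ (fun j => φ (f^[j] p)) n
  have h2 := Finset.sum_range_succ' (fun j => φ (f^[j] p)) n
  have : bsum f φ n (f p) - bsum f φ n p = φ (f^[n] p) - φ p := by
    unfold bsum
    simp only [Function.iterate_succ_apply, Function.iterate_zero, id] at h1 h2
    linarith
  rw [this]
  have h1 := hB (f^[n] p)
  have h2 := hB p
  rw [abs_le] at *
  constructor <;> linarith

theorem bsum_shift {Y : Type*} (f : Y → Y) (φ : Y → ℝ) (B : ℝ)
    (hB : ∀ p, |φ p| ≤ B) (n : ℕ) (p : Y) (d : ℕ) :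
    |bsum f φ n (f^[d] p) - bsum f φ n p| ≤ 2 * B * d := by
  induction d with
  | zero => simp
  | succ d ih =>
    rw [Function.iterate_succ_apply']
    have h1 := bsum_shift_one f φ B hB n (f^[d] p)
    push_cast
    rw [abs_le] at *
    constructor <;> linarith

theorem bsum_shift' {Y : Type*} (f : Y → Y) (φ : Y → ℝ) (B : ℝ)
    (hB : ∀ p, |φ p| ≤ B) (n : ℕ) (p : Y) (s s' g : ℕ) (h1 : s ≤ s' + g) (h2 : s' ≤ s + g) :
    |bsum f φ n (f^[s] p) - bsum f φ n (f^[s'] p)| ≤ 2 * B * g := by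
  have hB0 : 0 ≤ B := (abs_nonneg _).trans (hB p)
  rcases le_total s s' with h | h
  · obtain ⟨d, rfl⟩ := Nat.exists_eq_add_of_le h
    rw [add_comm s d, Function.iterate_add_apply, abs_sub_comm]
    refine (bsum_shift f φ B hB n _ d).trans ?_
    have : d ≤ g := by omega
    gcongr
  · obtain ⟨d, rfl⟩ := Nat.exists_eq_add_of_le h
    rw [add_comm s' d, Function.iterate_add_apply]
    refine (bsum_shift f φ B hB n _ d).trans ?_
    have : d ≤ g := by omega
    gcongr

theorem segStart_step (n g : ℕ) (t : ℕ → ℕ) (h0 : ∀ k, 0 < t k) (hg : ∀ k, t k ≤ g + 1) (k : ℕ) :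
    segStart (fun _ => n) t k + n ≤ segStart (fun _ => n) t (k + 1) ∧
      segStart (fun _ => n) t (k + 1) ≤ segStart (fun _ => n) t k + n + g := by
  unfold segStart
  rw [Finset.sum_range_succ]
  have := h0 k
  have := hg k
  beta_reduce
  omega

theorem segStart_bounds (n g : ℕ) (t : ℕ → ℕ) (h0 : ∀ k, 0 < t k) (hg : ∀ k, t k ≤ g + 1) (k : ℕ) :
    k * n ≤ segStart (fun _ => n) t k ∧ segStart (fun _ => n) t k ≤ k * (n + g) := by
  induction k with
  | zero => simp [segStart]
  | succ k ih =>
    have := segStart_step n g t h0 hg k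
    rw [Nat.succ_mul, Nat.succ_mul]
    omega

/-- quantized drift -/
def qd (n g : ℕ) (t : ℕ → ℕ) (k : ℕ) : ℕ :=
  (segStart (fun _ => n) t k - k * n) / (3 * g + 1)

theorem qd_props (n g : ℕ) (t : ℕ → ℕ) (h0 : ∀ k, 0 < t k) (hg : ∀ k, t k ≤ g + 1) (k : ℕ) :
    qd n g t k ≤ qd n g t (k + 1) ∧ qd n g t (k + 3) ≤ qd n g t k + 1 := by
  have a0 := segStart_bounds n g t h0 hg k
  have b0 := segStart_step n g t h0 hg k
  have b1 := segStart_step n g t h0 hg (k + 1)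
  have b2 := segStart_step n g t h0 hg (k + 2)
  unfold qd
  constructor
  · apply Nat.div_le_div_right
    rw [Nat.succ_mul]
    omega
  · rw [← Nat.add_div_right _ (by omega : 0 < 3 * g + 1)]
    apply Nat.div_le_div_right
    have : (k + 3) * n = k * n + n + n + n := by ring
    rw [this]
    simp only [add_assoc, Nat.reduceAdd] at *
    omega

/-- code of a group of three blocks -/
def qcode (n g : ℕ) (t : ℕ → ℕ) (i : ℕ) : ℕ :=
  qd n g t (3 * i + 1) + qd n g t (3 * i + 2) + qd n g t (3 * i + 3) - 3 * qd n g t (3 * i)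

theorem qcode_lt (n g : ℕ) (t : ℕ → ℕ) (h0 : ∀ k, 0 < t k) (hg : ∀ k, t k ≤ g + 1) (i : ℕ) :
    qcode n g t i < 4 := by
  have c0 := qd_props n g t h0 hg (3 * i)
  have c1 := qd_props n g t h0 hg (3 * i + 1)
  have c2 := qd_props n g t h0 hg (3 * i + 2)
  unfold qcode
  simp only [add_assoc, Nat.reduceAdd] at *
  omega

theorem qd_eq (n g : ℕ) (t t' : ℕ → ℕ) (h0 : ∀ k, 0 < t k) (hg : ∀ k, t k ≤ g + 1)
    (h0' : ∀ k, 0 < t' k) (hg' : ∀ k, t' k ≤ g + 1) (m : ℕ)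
    (hc : ∀ i < m, qcode n g t i = qcode n g t' i) :
    ∀ k ≤ 3 * m, qd n g t k = qd n g t' k := by
  induction m with
  | zero =>
    intro k hk
    obtain rfl : k = 0 := by omega
    simp [qd, segStart]
  | succ m ih =>
    intro k hk
    have ih' := ih (fun i hi => hc i (by omega))
    by_cases hk' : k ≤ 3 * m
    · exact ih' k hk'
    have e0 := ih' (3 * m) le_rfl
    have ec := hc m (by omega)
    have c0 := qd_props n g t h0 hg (3 * m)
    have c1 := qd_props n g t h0 hg (3 * m + 1)
    have c2 := qd_props n g t h0 hg (3 * m + 2)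
    have d0 := qd_props n g t' h0' hg' (3 * m)
    have d1 := qd_props n g t' h0' hg' (3 * m + 1)
    have d2 := qd_props n g t' h0' hg' (3 * m + 2)
    unfold qcode at ec
    simp only [add_assoc, Nat.reduceAdd] at *
    have : k = 3 * m + 1 ∨ k = 3 * m + 2 ∨ k = 3 * m + 3 := by omega
    rcases this with rfl | rfl | rfl <;> omega

theorem segStart_close (n g : ℕ) (t t' : ℕ → ℕ) (h0 : ∀ k, 0 < t k) (hg : ∀ k, t k ≤ g + 1)
    (h0' : ∀ k, 0 < t' k) (hg' : ∀ k, t' k ≤ g + 1) (k : ℕ)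
    (h : qd n g t k = qd n g t' k) :
    segStart (fun _ => n) t k ≤ segStart (fun _ => n) t' k + 3 * g := by
  have a := segStart_bounds n g t h0 hg k
  have a' := segStart_bounds n g t' h0' hg' k
  unfold qd at h
  have e1 := Nat.div_add_mod (segStart (fun _ => n) t k - k * n) (3 * g + 1)
  have e2 := Nat.div_add_mod (segStart (fun _ => n) t' k - k * n) (3 * g + 1)
  have l1 := Nat.mod_lt (segStart (fun _ => n) t k - k * n) (by omega : 0 < 3 * g + 1)
  rw [h] at e1
  omega

theorem aux_main {Y : Type*} [MetricSpace Y] [CompactSpace Y] [MeasurableSpace Y] [BorelSpace Y]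
    (f : Y → Y) (hf : Continuous f) (happ : ApproxProduct f)
    (μ ν : Measure Y) [IsProbabilityMeasure μ] [IsProbabilityMeasure ν]
    (hμ : MeasurePreserving f μ μ) (hν : MeasurePreserving f ν ν)
    (φ : Y → ℝ) (hφ : Continuous φ) (hlt : ∫ p, φ p ∂μ < ∫ p, φ p ∂ν) :
    0 < topEnt f := by
  classical
  obtain ⟨γ, hγ⟩ : ∃ γ, γ = ∫ p, φ p ∂ν - ∫ p, φ p ∂μ := ⟨_, rfl⟩
  have hγ0 : 0 < γ := by linarith
  obtain ⟨B, hB0, hB⟩ : ∃ B : ℝ, 0 < B ∧ ∀ p, |φ p| ≤ B := by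
    obtain ⟨C, hC⟩ := isCompact_univ.exists_bound_of_continuousOn (f := φ) hφ.continuousOn
    exact ⟨max C 1, by positivity, fun p => (hC p (Set.mem_univ p)).trans (le_max_left _ _)⟩
  have huc := CompactSpace.uniformContinuous_of_continuous hφ
  obtain ⟨ε', hε', hmod⟩ := Metric.uniformContinuous_iff.1 huc (γ / 6) (by positivity)
  obtain ⟨ε, hε, hεφ⟩ : ∃ ε : ℝ, 0 < ε ∧ ∀ p q, dist p q ≤ ε → |φ p - φ q| ≤ γ / 6 := by
    refine ⟨ε' / 2, by positivity, fun p q h => ?_⟩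
    have := hmod (a := p) (b := q) (by linarith)
    rw [Real.dist_eq] at this
    exact this.le
  set δ : ℝ := γ / (40 * B) with hδ
  have hδ0 : 0 < δ := by positivity
  have hBδ : B * δ = γ / 40 := by rw [hδ]; field_simp
  obtain ⟨M, hM⟩ := happ δ δ ε hδ0 hδ0 hε
  obtain ⟨n, hn⟩ : ∃ n, n = M + 1 := ⟨_, rfl⟩
  have hn0 : (0 : ℝ) < n := by rw [hn]; positivity
  obtain ⟨x, hx⟩ : ∃ x, bsum f φ n x ≤ n * ∫ p, φ p ∂μ := by
    obtain ⟨h1, h2⟩ := bsum_integral f μ hμ φ hφ hf n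
    rw [← h2]; exact exists_le_integral h1
  obtain ⟨y, hy⟩ : ∃ y, n * ∫ p, φ p ∂ν ≤ bsum f φ n y := by
    obtain ⟨h1, h2⟩ := bsum_integral f ν hν φ hφ hf n
    rw [← h2]; exact exists_integral_le h1
  have hxy : n * γ ≤ bsum f φ n y - bsum f φ n x := by
    rw [hγ, mul_sub]; linarith
  have hxy' : n * γ ≤ |bsum f φ n y - bsum f φ n x| := hxy.trans (le_abs_self _)
  set g : ℕ := ⌊δ * n⌋₊ with hg
  have hgle : (g : ℝ) ≤ δ * n := Nat.floor_le (by positivity)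
  have key : ∀ m : ℕ, 2 ^ m ≤ sepNum f Set.univ (3 * m * (n + g)) ε := by
    intro m
    let C : (Fin (3 * m) → Bool) → ℕ → Y := fun w k =>
      if h : k < 3 * m then (if w ⟨k, h⟩ then y else x) else x
    have hT := fun w => hM n (by omega) (C w)
    choose t ht0 htδ z hz using hT
    have htg : ∀ w k, t w k ≤ g + 1 := by
      intro w k
      have h1 := htδ w k
      have h0 := ht0 w k
      have : t w k - 1 ≤ g := by
        apply Nat.le_floor
        rw [Nat.cast_sub (by omega)]
        push_cast
        linarith
      omega
    let E : (Fin (3 * m) → Bool) → (Fin m → Fin 4) := fun w i =>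
      ⟨qcode n g (t w) i, qcode_lt n g (t w) (ht0 w) (htg w) i⟩
    obtain ⟨c, -, hc⟩ := Finset.exists_le_card_fiber_of_mul_le_card_of_maps_to
      (s := (Finset.univ : Finset (Fin (3 * m) → Bool)))
      (t := (Finset.univ : Finset (Fin m → Fin 4))) (f := E) (n := 2 ^ m)
      (fun _ _ => Finset.mem_univ _) Finset.univ_nonempty
      (by
        simp only [Finset.card_univ, Fintype.card_fun, Fintype.card_fin, Fintype.card_bool]
        rw [← mul_pow, pow_mul]
        norm_num)
    refine hc.trans (aux_le_sepNum f hf _ ε hε _ z ?_)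
    intro w hw w' hw' hne
    have hE : E w = E w' := by
      rw [(Finset.mem_filter.1 hw).2, (Finset.mem_filter.1 hw').2]
    obtain ⟨k, hk⟩ := Function.ne_iff.1 hne
    have hq := qd_eq n g (t w) (t w') (ht0 w) (htg w) (ht0 w') (htg w') m
      (fun i hi => by
        have := congrFun hE ⟨i, hi⟩
        simpa [E] using this) k (by omega)
    have s1 := segStart_close n g (t w) (t w') (ht0 w) (htg w) (ht0 w') (htg w') k hq
    have s2 := segStart_close n g (t w') (t w) (ht0 w') (htg w') (ht0 w) (htg w) k hq.symm
    have sb := (segStart_bounds n g (t w) (ht0 w) (htg w) k).2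
    by_contra! hcon
    have tr1 := bsum_trace f φ B (γ / 6) ε δ hB (by positivity) hεφ n _ (z w) _ (hz w k)
    have tr2 := bsum_trace f φ B (γ / 6) ε δ hB (by positivity) hεφ n _ (z w') _ (hz w' k)
    have sh := bsum_shift' f φ B hB n (z w') _ _ _ s1 s2
    have cl := bsum_trace f φ B (γ / 6) ε 0 hB (by positivity) hεφ n
      (segStart (fun _ => n) (t w) k) (z w) (f^[segStart (fun _ => n) (t w) k] (z w')) (by
        rw [Finset.filter_false_of_mem]
        · simp
        · intro j hj
          have hj := Finset.mem_range.1 hj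
          rw [not_lt, ← Function.iterate_add_apply, add_comm j]
          apply hcon
          have h3 : (k : ℕ) + 1 ≤ 3 * m := k.2
          have := Nat.mul_le_mul_right (n + g) h3
          rw [Nat.succ_mul] at this
          omega)
    have hC : |bsum f φ n (C w k) - bsum f φ n (C w' k)|
        = |bsum f φ n y - bsum f φ n x| := by
      have h1 : C w k = if w k then y else x := by simp [C]
      have h2 : C w' k = if w' k then y else x := by simp [C]
      rw [h1, h2]
      rcases hwk : w k with _ | _ <;> rcases hwk' : w' k with _ | _ <;>
        simp_all [abs_sub_comm]
    have hfin : |bsum f φ n (C w k) - bsum f φ n (C w' k)| < n * γ := by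
      have hgg : 2 * B * ((3 * g : ℕ) : ℝ) ≤ 6 * (γ / 40 * n) := by
        rw [← hBδ]; push_cast
        nlinarith
      have h2 : 2 * B * (δ * n) = 2 * (γ / 40 * n) := by rw [← hBδ]; ring
      have hp : 0 < n * γ := by positivity
      rw [h2] at tr1 tr2
      rw [abs_le] at tr1 tr2 sh cl
      rw [abs_lt]
      constructor <;> nlinarith
    linarith
  have hng : (0 : ℝ) < n + g := by positivity
  have hlow : ((Real.log 2 / (3 * (n + g)) : ℝ) : EReal) ≤ entScale f Set.univ ε := by
    unfold entScale
    refine le_limsup_of_frequently_le ?_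
    · rw [Filter.frequently_atTop]
      intro a
      refine ⟨3 * (a + 1) * (n + g), ?_, ?_⟩
      · have : 1 ≤ n + g := by omega
        nlinarith
      · rw [EReal.coe_le_coe_iff]
        have hk := key (a + 1)
        have hk' : ((2 : ℝ) ^ (a + 1)) ≤ (sepNum f Set.univ (3 * (a + 1) * (n + g)) ε : ℝ) := by
          exact_mod_cast hk
        have hl := Real.log_le_log (by positivity) hk'
        rw [Real.log_pow] at hl
        rw [div_le_div_iff₀ (by positivity) (by push_cast; positivity)]
        push_cast at hl ⊢
        calc Real.log 2 * (3 * (a + 1) * (n + g)) = ((a + 1) * Real.log 2) * (3 * (n + g)) := by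
              ring
          _ ≤ _ := by gcongr
  have hpos : (0 : EReal) < ((Real.log 2 / (3 * (n + g)) : ℝ) : EReal) := by
    have := Real.log_pos one_lt_two
    exact_mod_cast (by positivity : 0 < Real.log 2 / (3 * ((n : ℝ) + g)))
  refine hpos.trans_le (hlow.trans ?_)
  unfold topEnt
  exact le_iSup₂_of_le ε hε le_rfl


/-- If a compact system with the approximate product property has two distinct
ergodic invariant Borel probability measures, then its topological entropy is
strictly positive. -/
theorem app_two_ergodic_measures_topEnt_pos
    {X : Type*} [MetricSpace X] [CompactSpace X] [MeasurableSpace X] [BorelSpace X]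
    (f : X → X) (hf : Continuous f) (happ : ApproxProduct f)
    (μ ν : Measure X) (hμp : IsProbabilityMeasure μ) (hνp : IsProbabilityMeasure ν)
    (hμ : Ergodic f μ) (hν : Ergodic f ν) (hne : μ ≠ ν) :
    0 < topEnt f := by
  have hex : ∃ φ : BoundedContinuousFunction X ℝ, ∫ p, φ p ∂μ ≠ ∫ p, φ p ∂ν := by
    by_contra! h
    exact hne (ext_of_forall_integral_eq_of_IsFiniteMeasure h)
  obtain ⟨φ, hφ⟩ := hex
  rcases lt_or_gt_of_ne hφ with h | h
  · exact aux_main f hf happ μ ν hμ.toMeasurePreserving hν.toMeasurePreserving φ φ.continuous h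
  · exact aux_main f hf happ ν μ hν.toMeasurePreserving hμ.toMeasurePreserving φ φ.continuous h
end Defs
end

section
/- Let (X,d) be a compact metric space and f : X → X a continuous map such that (X,f) has the approximate product property. If the topological entropy of (X,f) is strictly positive, then (X,f) admits at least two distinct ergodic f-invariant Borel probability measures. -/
open MeasureTheory Filter Set

section Defs

variable {X : Type*} [MetricSpace X]

set_option linter.unusedSectionVars false

theorem aux_conv {a b p u v : ℝ} (ha : 0 < a) (hab : a + b = 1)
    (e : p = a * u + b * v) (hv : v ≤ p) (hb : 0 ≤ b) : p ≤ u := by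
  have h1 : b * v ≤ b * p := mul_le_mul_of_nonneg_left hv hb
  have h2 : a * p ≤ a * u := by
    have : a * p + b * p = p := by rw [← add_mul, hab, one_mul]
    linarith
  exact le_of_mul_le_mul_left h2 ha

section PartA
variable [CompactSpace X] [MeasurableSpace X] [BorelSpace X]

theorem aux_integrable (P : ProbabilityMeasure X) (φ : C(X, ℝ)) :
    Integrable (fun x => φ x) (P : Measure X) :=
  (BoundedContinuousFunction.mkOfCompact φ).integrable _

theorem aux_cont (φ : C(X, ℝ)) :
    Continuous (fun P : ProbabilityMeasure X => ∫ x, φ x ∂(P : Measure X)) :=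
  ProbabilityMeasure.continuous_integral_boundedContinuousFunction
    (BoundedContinuousFunction.mkOfCompact φ)

theorem aux_ext {μ ν : Measure X} [IsProbabilityMeasure μ] [IsProbabilityMeasure ν]
    (h : ∀ φ : C(X, ℝ), ∫ x, φ x ∂μ = ∫ x, φ x ∂ν) : μ = ν :=
  ext_of_forall_integral_eq_of_IsFiniteMeasure (fun g => h g.toContinuousMap)

def faceSeq (I : Set (ProbabilityMeasure X)) (φ : ℕ → C(X, ℝ)) :
    ℕ → Set (ProbabilityMeasure X)
  | 0 => I
  | n + 1 => {P | P ∈ faceSeq I φ n ∧ ∀ Q ∈ faceSeq I φ n,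
      ∫ x, φ n x ∂(Q : Measure X) ≤ ∫ x, φ n x ∂(P : Measure X)}

theorem faceSeq_props (I : Set (ProbabilityMeasure X)) (hI : IsCompact I) (hne : I.Nonempty)
    (φ : ℕ → C(X, ℝ)) (n : ℕ) :
    IsCompact (faceSeq I φ n) ∧ (faceSeq I φ n).Nonempty := by
  induction n with
  | zero => exact ⟨hI, hne⟩
  | succ n ih =>
    obtain ⟨hc, hn⟩ := ih
    obtain ⟨P, hP, hmax⟩ := hc.exists_isMaxOn hn (aux_cont (φ n)).continuousOn
    refine ⟨?_, P, hP, fun Q hQ => hmax hQ⟩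
    have : faceSeq I φ (n+1) = faceSeq I φ n ∩
        {R | ∫ x, φ n x ∂(P : Measure X) ≤ ∫ x, φ n x ∂(R : Measure X)} := by
      ext R
      constructor
      · rintro ⟨h1, h2⟩
        exact ⟨h1, h2 P hP⟩
      · rintro ⟨h1, h2⟩
        exact ⟨h1, fun Q hQ => (hmax hQ).trans h2⟩
    rw [this]
    exact hc.inter_right (isClosed_le continuous_const (aux_cont (φ n)))

theorem exists_ergodic_ge (f : X → X) (hf : Continuous f) (ψ : C(X, ℝ)) (c : ℝ)
    (P₀ : ProbabilityMeasure X) (hP₀ : MeasurePreserving f (P₀ : Measure X) P₀)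
    (hc : c ≤ ∫ x, ψ x ∂(P₀ : Measure X)) :
    ∃ μ : Measure X, IsProbabilityMeasure μ ∧ Ergodic f μ ∧ c ≤ ∫ x, ψ x ∂μ := by
  classical
  set I : Set (ProbabilityMeasure X) := {P | MeasurePreserving f (P : Measure X) P} with hIdef
  have hIeq : I = ⋂ φ : C(X, ℝ), {P : ProbabilityMeasure X |
      ∫ x, (φ.comp ⟨f, hf⟩) x ∂(P : Measure X) = ∫ x, φ x ∂(P : Measure X)} := by
    ext P
    simp only [hIdef, mem_ofPred_eq, mem_iInter]
    constructor
    · intro h φ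
      have := integral_map (μ := (P : Measure X)) h.measurable.aemeasurable
        (f := fun x => φ x) φ.continuous.aestronglyMeasurable
      rw [h.map_eq] at this
      simpa using this.symm
    · intro h
      refine ⟨hf.measurable, ?_⟩
      have : IsProbabilityMeasure (Measure.map f (P : Measure X)) :=
        Measure.isProbabilityMeasure_map hf.measurable.aemeasurable
      apply aux_ext
      intro φ
      rw [integral_map hf.measurable.aemeasurable φ.continuous.aestronglyMeasurable]
      simpa using h φ
  have hIc : IsCompact I := by
    rw [hIeq]
    exact (isClosed_iInter fun φ => isClosed_eq (aux_cont _) (aux_cont _)).isCompact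
  let φ : ℕ → C(X, ℝ) := fun n => Nat.casesOn n ψ (fun k => TopologicalSpace.denseSeq C(X, ℝ) k)
  have hprops := faceSeq_props I hIc ⟨P₀, hP₀⟩ φ
  have hanti : ∀ n, faceSeq I φ (n+1) ⊆ faceSeq I φ n := fun n P hP => hP.1
  obtain ⟨P, hP⟩ := IsCompact.nonempty_iInter_of_sequence_nonempty_isCompact_isClosed
    (faceSeq I φ) hanti (fun n => (hprops n).2) (hprops 0).1 (fun n => (hprops n).1.isClosed)
  rw [mem_iInter] at hP
  have hPI : MeasurePreserving f (P : Measure X) P := hP 0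
  refine ⟨P, inferInstance, ?_, hc.trans ((hP 1).2 P₀ hP₀)⟩
  apply Ergodic.of_mem_extremePoints
  rw [mem_extremePoints_iff_left]
  refine ⟨⟨hPI, inferInstance⟩, ?_⟩
  rintro ν₁ ⟨h1, h1p⟩ ν₂ ⟨h2, h2p⟩ ⟨a, b, ha, hb, hab, hsum⟩
  let P₁ : ProbabilityMeasure X := ⟨ν₁, h1p⟩
  let P₂ : ProbabilityMeasure X := ⟨ν₂, h2p⟩
  have haT : a ≠ ⊤ := fun h => by simp [h] at hab
  have hbT : b ≠ ⊤ := fun h => by simp [h] at hab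
  have ha' : 0 < a.toReal := ENNReal.toReal_pos ha.ne' haT
  have hb' : 0 < b.toReal := ENNReal.toReal_pos hb.ne' hbT
  have hab' : a.toReal + b.toReal = 1 := by
    rw [← ENNReal.toReal_add haT hbT, hab]; simp
  have hint : ∀ g : C(X, ℝ), ∫ x, g x ∂(P : Measure X) =
      a.toReal * ∫ x, g x ∂ν₁ + b.toReal * ∫ x, g x ∂ν₂ := by
    intro g
    rw [← hsum, integral_add_measure, integral_smul_measure, integral_smul_measure]
    · simp
    · exact (aux_integrable P₁ g).smul_measure haT
    · exact (aux_integrable P₂ g).smul_measure hbT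
  have key : ∀ n, P₁ ∈ faceSeq I φ n ∧ P₂ ∈ faceSeq I φ n := by
    intro n
    induction n with
    | zero => exact ⟨h1, h2⟩
    | succ n ih =>
      have e := hint (φ n)
      have m := (hP (n+1)).2
      have m1 : ∫ x, φ n x ∂ν₁ ≤ _ := m P₁ ih.1
      have m2 : ∫ x, φ n x ∂ν₂ ≤ _ := m P₂ ih.2
      have e1 : ∫ x, φ n x ∂(P : Measure X) ≤ ∫ x, φ n x ∂ν₁ := aux_conv ha' hab' e m2 hb'.le
      have e2 : ∫ x, φ n x ∂(P : Measure X) ≤ ∫ x, φ n x ∂ν₂ :=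
        aux_conv hb' ((add_comm _ _).trans hab') (e.trans (add_comm _ _)) m1 ha'.le
      exact ⟨⟨ih.1, fun Q hQ => (m Q hQ).trans e1⟩, ⟨ih.2, fun Q hQ => (m Q hQ).trans e2⟩⟩
  have heq : ∀ n, ∫ x, φ n x ∂ν₁ = ∫ x, φ n x ∂(P : Measure X) := fun n =>
    le_antisymm ((hP (n+1)).2 P₁ (key n).1) ((key (n+1)).1.2 P (hP n))
  apply aux_ext
  -- density
  have hcontint : ∀ R : ProbabilityMeasure X,
      Continuous (fun g : C(X, ℝ) => ∫ x, g x ∂(R : Measure X)) := by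
    intro R
    refine (LipschitzWith.of_dist_le_mul (K := 1) fun g g' => ?_).continuous
    rw [Real.dist_eq, ← integral_sub (aux_integrable R g) (aux_integrable R g')]
    have := norm_integral_le_of_norm_le_const (μ := (R : Measure X)) (C := dist g g')
      (f := fun x => g x - g' x)
      (Eventually.of_forall fun x => by
        rw [← dist_eq_norm]; exact ContinuousMap.dist_apply_le_dist x)
    simpa using this
  intro g
  have := (TopologicalSpace.denseRange_denseSeq C(X, ℝ)).equalizer (hcontint P₁) (hcontint P)
    (funext fun n => heq (n+1))
  exact congrFun this g

theorem exists_invariant_of_averages (f : X → X) (hf : Continuous f) (ψ : C(X, ℝ)) (c : ℝ)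
    (h : ∀ k : ℕ, ∃ m : ℕ, k < m ∧ ∃ y : X, c * m ≤ ∑ i ∈ Finset.range m, ψ (f^[i] y)) :
    ∃ P : ProbabilityMeasure X, MeasurePreserving f (P : Measure X) P ∧
      c ≤ ∫ x, ψ x ∂(P : Measure X) := by
  choose m hm y hy using h
  have hmpos : ∀ k, (0 : ℝ) < m k := fun k => by
    have := hm k
    exact_mod_cast (by omega : 0 < m k)
  let ν : ℕ → Measure X := fun k =>
    ((m k : ENNReal)⁻¹) • ∑ i ∈ Finset.range (m k), Measure.dirac (f^[i] (y k))
  have hν : ∀ k, IsProbabilityMeasure (ν k) := by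
    intro k
    constructor
    have h0 : (m k : ENNReal) ≠ 0 := by
      have := hm k
      exact_mod_cast (by omega : m k ≠ 0)
    simp only [ν, Measure.smul_apply, Measure.finsetSum_apply, measure_univ, Finset.sum_const,
      Finset.card_range, nsmul_eq_mul, mul_one, smul_eq_mul]
    exact ENNReal.inv_mul_cancel h0 (ENNReal.natCast_ne_top _)
  have hint : ∀ k (g : C(X, ℝ)), ∫ x, g x ∂(ν k) =
      (m k : ℝ)⁻¹ * ∑ i ∈ Finset.range (m k), g (f^[i] (y k)) := by
    intro k g
    simp only [ν]
    rw [integral_smul_measure, integral_finsetSum_measure]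
    · simp
    · intro i _
      exact (BoundedContinuousFunction.mkOfCompact g).integrable _
  let Q : ℕ → ProbabilityMeasure X := fun k => ⟨ν k, hν k⟩
  obtain ⟨P, -, hP⟩ := isCompact_univ.ultrafilter_le_nhds ((hyperfilter ℕ).map Q) (by simp)
  have hlim : ∀ g : C(X, ℝ), Tendsto (fun k => ∫ x, g x ∂(ν k)) (hyperfilter ℕ)
      (nhds (∫ x, g x ∂(P : Measure X))) := fun g => ((aux_cont g).tendsto P).comp hP
  refine ⟨P, ⟨hf.measurable, ?_⟩, ?_⟩
  · have : IsProbabilityMeasure (Measure.map f (P : Measure X)) :=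
        Measure.isProbabilityMeasure_map hf.measurable.aemeasurable
    apply aux_ext
    intro g
    rw [integral_map hf.measurable.aemeasurable g.continuous.aestronglyMeasurable]
    have l1 := (hlim (g.comp ⟨f, hf⟩)).sub (hlim g)
    have l2 : Tendsto (fun k => ∫ x, (g.comp ⟨f, hf⟩) x ∂(ν k) - ∫ x, g x ∂(ν k))
        (hyperfilter ℕ) (nhds 0) := by
      apply Tendsto.mono_left _ (Nat.hyperfilter_le_atTop)
      have hb : Tendsto (fun k : ℕ => (2 * ‖g‖) * (1 / ((k : ℝ) + 1))) atTop (nhds 0) := by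
        simpa using (tendsto_one_div_add_atTop_nhds_zero_nat (𝕜 := ℝ)).const_mul (2 * ‖g‖)
      refine squeeze_zero_norm (fun k => ?_) hb
      rw [hint, hint, ← mul_sub, ← Finset.sum_sub_distrib]
      have e : ∑ i ∈ Finset.range (m k), ((g.comp ⟨f, hf⟩) (f^[i] (y k)) - g (f^[i] (y k)))
          = g (f^[m k] (y k)) - g (y k) := by
        refine Eq.trans ?_ (Finset.sum_range_sub (fun i => g (f^[i] (y k))) (m k))
        · refine Finset.sum_congr rfl fun i _ => ?_
          simp [Function.iterate_succ_apply']
      rw [e, norm_mul, mul_comm]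
      have n1 : ‖g (f^[m k] (y k)) - g (y k)‖ ≤ 2 * ‖g‖ := by
        refine (norm_sub_le _ _).trans ?_
        have := g.norm_coe_le_norm (f^[m k] (y k))
        have := g.norm_coe_le_norm (y k)
        linarith
      have n2 : ‖(m k : ℝ)⁻¹‖ ≤ 1 / ((k : ℝ) + 1) := by
        rw [norm_inv, Real.norm_of_nonneg (hmpos k).le, one_div]
        apply inv_anti₀ (by positivity)
        exact_mod_cast hm k
      exact mul_le_mul n1 n2 (norm_nonneg _) (by positivity)
    have := tendsto_nhds_unique l1 l2
    simpa [sub_eq_zero] using this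
  · refine ge_of_tendsto (hlim ψ) (Eventually.of_forall fun k => ?_)
    rw [hint, inv_mul_eq_div, le_div_iff₀ (hmpos k)]
    exact hy k

theorem exists_ergodic_of_averages (f : X → X) (hf : Continuous f) (ψ : C(X, ℝ)) (c : ℝ)
    (h : ∀ k : ℕ, ∃ m : ℕ, k < m ∧ ∃ y : X, c * m ≤ ∑ i ∈ Finset.range m, ψ (f^[i] y)) :
    ∃ μ : Measure X, IsProbabilityMeasure μ ∧ Ergodic f μ ∧ c ≤ ∫ x, ψ x ∂μ := by
  obtain ⟨P, hP, hc⟩ := exists_invariant_of_averages f hf ψ c h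
  exact exists_ergodic_ge f hf ψ c P hP hc

end PartA

theorem chernoff_count {A : Type*} [Fintype A] [DecidableEq A] (a0 : A) (m : ℕ) (τ K : ℝ)
    (hτ : 0 ≤ τ) (T : Finset (Fin m → A))
    (hT : ∀ c ∈ T, (((Finset.univ.filter (fun p => c p ≠ a0)).card : ℕ) : ℝ) ≤ K) :
    (T.card : ℝ) ≤ Real.exp (τ * K + m * (Fintype.card A * Real.exp (-τ))) := by
  set w : A → ℝ := fun a => if a = a0 then 1 else Real.exp (-τ) with hw
  have hw0 : ∀ a, 0 ≤ w a := fun a => by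
    simp only [hw]; split_ifs <;> positivity
  have h1 : ∀ c ∈ T, Real.exp (-(τ * K)) ≤ ∏ p, w (c p) := by
    intro c hc
    have e : ∏ p, w (c p) = Real.exp (-τ) ^ (Finset.univ.filter (fun p => c p ≠ a0)).card := by
      simp only [hw]
      rw [Finset.prod_ite]
      simp
    rw [e, ← Real.exp_nat_mul]
    apply Real.exp_le_exp.2
    nlinarith [hT c hc]
  have h2 : (T.card : ℝ) * Real.exp (-(τ * K)) ≤ (∑ a, w a) ^ m := by
    rw [Fintype.sum_pow]
    calc (T.card : ℝ) * Real.exp (-(τ * K)) = ∑ c ∈ T, Real.exp (-(τ * K)) := by simp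
      _ ≤ ∑ c ∈ T, ∏ p, w (c p) := Finset.sum_le_sum h1
      _ ≤ _ := Finset.sum_le_univ_sum_of_nonneg (fun c => Finset.prod_nonneg fun p _ => hw0 _)
  have h3 : ∑ a, w a ≤ Real.exp (Fintype.card A * Real.exp (-τ)) := by
    have : ∑ a, w a ≤ ∑ a, ((if a = a0 then 1 else 0) + Real.exp (-τ)) := by
      refine Finset.sum_le_sum fun a _ => ?_
      simp only [hw]
      split_ifs
      · have := Real.exp_pos (-τ); linarith
      · simp
    refine this.trans ?_
    rw [Finset.sum_add_distrib]
    simp only [Finset.sum_ite_eq', Finset.mem_univ, if_true, Finset.sum_const, Finset.card_univ,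
      nsmul_eq_mul]
    rw [add_comm]
    exact Real.add_one_le_exp _
  have h4 : (∑ a, w a) ^ m ≤ Real.exp (m * (Fintype.card A * Real.exp (-τ))) := by
    rw [Real.exp_nat_mul]
    exact pow_le_pow_left₀ (Finset.sum_nonneg fun a _ => hw0 a) h3 m
  have h5 := h2.trans h4
  rw [Real.exp_add]
  calc (T.card : ℝ) = Real.exp (τ * K) * (T.card * Real.exp (-(τ * K))) := by
        rw [mul_left_comm, ← Real.exp_add]; simp
    _ ≤ _ := mul_le_mul_of_nonneg_left h5 (Real.exp_pos _).le

theorem sep_card_bound (f : X → X) (m Q : ℕ) (ε₁ : ℝ) (q : X → Fin Q)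
    (hq : ∀ u v, q u = q v → dist u v ≤ ε₁) (W : Finset ℕ → ℕ → X) (K τ : ℝ) (hτ : 0 ≤ τ)
    (S : Finset X)
    (hS : ∀ y ∈ S, ∀ y' ∈ S, y ≠ y' → ∃ j < m, ε₁ < dist (f^[j] y) (f^[j] y'))
    (hcode : ∀ y : X, ∃ B E : Finset ℕ, B ⊆ Finset.range m ∧ E ⊆ Finset.range m ∧
      (B.card + E.card : ℝ) ≤ K ∧ ∀ p < m, p ∉ E → dist (f^[p] y) (W B p) ≤ ε₁ / 2) :
    (S.card : ℝ) ≤ Real.exp (τ * K + m * ((2 * (Q + 1) : ℝ) * Real.exp (-τ))) := by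
  classical
  choose B E hB hE hK hd using hcode
  let code : X → Fin m → Bool × Option (Fin Q) := fun y p =>
    (decide ((p : ℕ) ∈ B y), if (p : ℕ) ∈ E y then some (q (f^[p] y)) else none)
  have hinj : Set.InjOn code S := by
    intro y hy y' hy' hc
    by_contra hne
    obtain ⟨j, hj, hlt⟩ := hS y hy y' hy' hne
    have hBB : B y = B y' := by
      ext p
      by_cases hp : p < m
      · have := congrArg Prod.fst (congrFun hc ⟨p, hp⟩)
        simpa [code] using this
      · exact ⟨fun h => absurd (Finset.mem_range.1 (hB y h)) hp,
          fun h => absurd (Finset.mem_range.1 (hB y' h)) hp⟩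
    have h2 := congrArg Prod.snd (congrFun hc ⟨j, hj⟩)
    simp only [code] at h2
    by_cases h3 : j ∈ E y <;> by_cases h4 : j ∈ E y' <;> simp [h3, h4] at h2
    · exact absurd (hq _ _ h2) (not_le.2 hlt)
    · have a := hd y j hj h3
      have b := hd y' j hj h4
      rw [← hBB] at b
      have := dist_triangle_right (f^[j] y) (f^[j] y') (W (B y) j)
      linarith
  have := chernoff_count ((false, none) : Bool × Option (Fin Q)) m τ K hτ (S.image code) (by
    intro c hc
    obtain ⟨y, hy, rfl⟩ := Finset.mem_image.1 hc
    refine le_trans ?_ (hK y)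
    have h1 : (Finset.univ.filter (fun p => code y p ≠ (false, none))).card ≤
        (B y ∪ E y).card := by
      refine Finset.card_le_card_of_injOn (fun p => (p : ℕ)) ?_ ?_
      · intro p hp
        simp only [Finset.coe_filter, Finset.mem_univ, true_and, Set.mem_ofPred_eq, code] at hp
        simp only [Finset.coe_union, Set.mem_union, Finset.mem_coe]
        by_contra hcon
        push Not at hcon
        apply hp
        simp [hcon.1, hcon.2]
      · intro a _ b _ h
        exact Fin.ext h
    exact_mod_cast h1.trans (Finset.card_union_le _ _))
  rw [Finset.card_image_of_injOn hinj] at this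
  simpa using this

/-- The pseudo-orbit restarting at `x` at each time in `B` (and at time `0`). -/
noncomputable def wrd (f : X → X) (x : X) (B : Finset ℕ) (p : ℕ) : X :=
  f^[p - Nat.findGreatest (· ∈ B) p] x

theorem sum_blocks (g : ℕ → ℝ) (L N : ℕ) :
    ∑ i ∈ Finset.range (L * N), g i =
      ∑ l ∈ Finset.range L, ∑ j ∈ Finset.range N, g (l * N + j) := by
  induction L with
  | zero => simp
  | succ L ih => rw [Finset.sum_range_succ, ← ih, Nat.succ_mul, Finset.sum_range_add]

theorem concat_bound (f : X → X) (x y : X) (N M m : ℕ) (hN : 0 < N) (ψ : X → ℝ)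
    (hψ0 : ∀ y, 0 ≤ ψ y)
    (hψ : ∀ y, ∃ B : Finset ℕ, B.card ≤ M ∧
      ∑ p ∈ Finset.range N, min 1 (dist (f^[p] y) (wrd f x B p)) ≤ ψ y)
    (c : ℝ) (hsum : ∑ i ∈ Finset.range m, ψ (f^[i] y) ≤ c * N * m)
    (ε₂ : ℝ) (h0 : 0 < ε₂) (h1 : ε₂ ≤ 1) :
    ∃ B E : Finset ℕ, B ⊆ Finset.range m ∧ E ⊆ Finset.range m ∧
      (B.card : ℝ) ≤ (m / N + 1 : ℝ) * (M + 1) ∧ ε₂ * E.card ≤ 2 * N + c * m ∧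
      ∀ p < m, p ∉ E → dist (f^[p] y) (wrd f x B p) ≤ ε₂ := by
  classical
  choose Bf hBc hBs using hψ
  set L := m / N with hL
  have hLN : L * N ≤ m := Nat.div_mul_le_self m N
  have hmL : m ≤ L * N + N := by
    have h1 := Nat.div_add_mod' m N
    have := Nat.mod_lt m hN
    rw [← hL] at h1
    omega
  -- choose the offset
  obtain ⟨r, hr, hrs⟩ : ∃ r ∈ Finset.range N,
      ∑ l ∈ Finset.range L, ψ (f^[l * N + r] y) ≤ c * m := by
    apply Finset.exists_le_of_sum_le (Finset.nonempty_range_iff.2 hN.ne')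
    rw [Finset.sum_comm, ← sum_blocks (fun i => ψ (f^[i] y))]
    refine le_trans ?_ (hsum.trans (le_of_eq ?_))
    · exact Finset.sum_le_sum_of_subset_of_nonneg (Finset.range_subset_range.2 hLN)
        (fun i _ _ => hψ0 _)
    · simp; ring
  have hrN : r < N := Finset.mem_range.1 hr
  let Bl : ℕ → Finset ℕ := fun l => Bf (f^[l * N + r] y)
  let B : Finset ℕ := (Finset.range m).filter
    (fun p => r ≤ p ∧ ((p - r) % N = 0 ∨ (p - r) % N ∈ Bl ((p - r) / N)))
  have hmem : ∀ l j, j < N → (r + (l * N + j) ∈ B ↔ r + (l * N + j) < m ∧ (j = 0 ∨ j ∈ Bl l)) := by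
    intro l j hj
    have e1 : (l * N + j) % N = j := by
      rw [Nat.mul_add_mod', Nat.mod_eq_of_lt hj]
    have e2 : (l * N + j) / N = l := by
      rw [mul_comm, Nat.mul_add_div hN, Nat.div_eq_of_lt hj, add_zero]
    simp [B, e1, e2]
  have hword : ∀ l j, j < N → r + (l * N + j) < m →
      wrd f x B (r + (l * N + j)) = wrd f x (Bl l) j := by
    intro l j hj hm
    set g := Nat.findGreatest (· ∈ Bl l) j with hg
    have hgj : g ≤ j := Nat.findGreatest_le j
    have hgg := (Nat.findGreatest_eq_iff (P := (· ∈ Bl l)) (k := j) (m := g)).1 hg.symm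
    have : Nat.findGreatest (· ∈ B) (r + (l * N + j)) = r + (l * N + g) := by
      rw [Nat.findGreatest_eq_iff]
      refine ⟨by omega, fun _ => ?_, ?_⟩
      · rw [hmem l g (by omega)]
        refine ⟨by omega, ?_⟩
        by_cases h : g = 0
        · exact Or.inl h
        · exact Or.inr (hgg.2.1 h)
      · intro n hn1 hn2 hn
        obtain ⟨j', rfl⟩ : ∃ j', n = r + (l * N + j') := ⟨n - (r + l * N), by omega⟩
        rw [hmem l j' (by omega)] at hn
        rcases hn.2 with h | h
        · omega
        · exact hgg.2.2 (by omega) (by omega) h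
    have e3 : r + (l * N + j) - (r + (l * N + g)) = j - g := by omega
    have e4 : wrd f x B (r + (l * N + j)) =
      f^[r + (l * N + j) - Nat.findGreatest (· ∈ B) (r + (l * N + j))] x := rfl
    rw [e4, this, e3]
    rfl
  let e : ℕ → ℝ := fun p => min 1 (dist (f^[p] y) (wrd f x B p))
  have he0 : ∀ p, 0 ≤ e p := fun p => le_min zero_le_one dist_nonneg
  have he1 : ∀ p, e p ≤ 1 := fun p => min_le_left _ _
  have hblock : ∀ l, l < L → ∑ j ∈ Finset.range N, (if r + (l * N + j) < m then
      e (r + (l * N + j)) else 0) ≤ ψ (f^[l * N + r] y) := by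
    intro l hl
    refine le_trans (Finset.sum_le_sum fun j hj => ?_) (hBs _)
    have hj := Finset.mem_range.1 hj
    split_ifs with hm
    · simp only [e]
      rw [hword l j hj hm, ← Function.iterate_add_apply,
        show j + (l * N + r) = r + (l * N + j) by ring]
    · exact le_min zero_le_one dist_nonneg
  have hesum : ∑ p ∈ Finset.range m, e p ≤ 2 * N + c * m := by
    set F : ℕ → ℝ := fun p => if p < m then e p else 0 with hF
    have hF0 : ∀ p, 0 ≤ F p := fun p => by
      simp only [hF]; split_ifs; exacts [he0 p, le_rfl]
    have hF1 : ∀ p, F p ≤ 1 := fun p => by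
      simp only [hF]; split_ifs; exacts [he1 p, zero_le_one]
    calc ∑ p ∈ Finset.range m, e p = ∑ p ∈ Finset.range m, F p :=
          Finset.sum_congr rfl fun p hp => by simp [hF, Finset.mem_range.1 hp]
      _ ≤ ∑ p ∈ Finset.range (r + L * N + N), F p :=
          Finset.sum_le_sum_of_subset_of_nonneg (Finset.range_subset_range.2 (by omega))
            (fun i _ _ => hF0 _)
      _ = ∑ p ∈ Finset.range r, F p + ∑ l ∈ Finset.range L, ∑ j ∈ Finset.range N,
            F (r + (l * N + j)) + ∑ j ∈ Finset.range N, F (r + L * N + j) := by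
          rw [Finset.sum_range_add, Finset.sum_range_add,
            sum_blocks (fun i => F (r + i))]
      _ ≤ r + c * m + N := by
          refine add_le_add (add_le_add ?_ ?_) ?_
          · refine (Finset.sum_le_sum fun p _ => hF1 p).trans (by simp)
          · exact (Finset.sum_le_sum fun l hl => hblock l (Finset.mem_range.1 hl)).trans hrs
          · refine (Finset.sum_le_sum fun p _ => hF1 _).trans (by simp)
      _ ≤ 2 * N + c * m := by
          have : (r : ℝ) ≤ N := by exact_mod_cast hrN.le
          linarith
  refine ⟨B, (Finset.range m).filter (fun p => ε₂ < dist (f^[p] y) (wrd f x B p)),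
    Finset.filter_subset _ _, Finset.filter_subset _ _, ?_, ?_, ?_⟩
  · have hBcard : B.card ≤ (L + 1) * (M + 1) := by
      have hsub : B ⊆ (Finset.range (L + 1)).biUnion
          (fun l => (insert 0 (Bl l)).image (fun j => r + (l * N + j))) := by
        intro p hp
        simp only [B, Finset.mem_filter, Finset.mem_range] at hp
        simp only [Finset.mem_biUnion, Finset.mem_image, Finset.mem_range, Finset.mem_insert]
        refine ⟨(p - r) / N, ?_, (p - r) % N, hp.2.2, ?_⟩
        · exact Nat.lt_succ_of_le (Nat.div_le_div_right (by omega))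
        · rw [mul_comm, Nat.div_add_mod]; omega
      refine (Finset.card_le_card hsub).trans (Finset.card_biUnion_le.trans ?_)
      refine (Finset.sum_le_card_nsmul _ _ (M + 1) fun l _ => ?_).trans (by simp)
      exact Finset.card_image_le.trans ((Finset.card_insert_le _ _).trans
        (Nat.succ_le_succ (hBc _)))
    calc (B.card : ℝ) ≤ ((L + 1) * (M + 1) : ℕ) := by exact_mod_cast hBcard
      _ = ((L : ℝ) + 1) * (M + 1) := by push_cast; ring
      _ ≤ _ := by
        have : (L : ℝ) ≤ m / N := Nat.cast_div_le
        gcongr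
  · refine le_trans ?_ hesum
    rw [mul_comm, ← nsmul_eq_mul]
    refine (Finset.card_nsmul_le_sum _ e ε₂ fun p hp => ?_).trans ?_
    · exact le_min h1 (Finset.mem_filter.1 hp).2.le
    · exact Finset.sum_le_sum_of_subset_of_nonneg (Finset.filter_subset _ _)
        (fun i _ _ => he0 _)
  · intro p hp hE
    by_contra hcon
    exact hE (Finset.mem_filter.2 ⟨Finset.mem_range.2 hp, not_le.1 hcon⟩)

theorem window_bound (f : X → X) (x z : X) (n M : ℕ) (t : ℕ → ℕ) (hn : 0 < n) (ε : ℝ)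
    (hε : 0 < ε) (hε1 : ε ≤ 1) (ht : ∀ k, 0 < t k) (ht2 : ∀ k, (t k : ℝ) ≤ 1 + ε * n)
    (htr : Traced f (fun _ => x) (fun _ => n) t ε ε z) (i : ℕ) :
    ∃ B : Finset ℕ, B ⊆ Finset.range (n * M) ∧ B.card ≤ M ∧
      ∑ p ∈ Finset.range (n * M), min 1 (dist (f^[p] (f^[i] z)) (wrd f x B p)) ≤
        2 * n + M * (3 * ε * n) := by
  classical
  set s : ℕ → ℕ := segStart (fun _ => n) t with hs
  have hs0 : s 0 = 0 := by simp [hs, segStart]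
  have hs1 : ∀ k, s (k + 1) = s k + (n + (t k - 1)) := by
    intro k
    have := ht k
    simp only [hs, segStart, Finset.sum_range_succ]
    omega
  have hmono : StrictMono s := strictMono_nat_of_lt_succ fun k => by rw [hs1]; omega
  have hgrow : ∀ k l, s k + n * l ≤ s (k + l) := by
    intro k l
    induction l with
    | zero => simp
    | succ l ih => rw [← add_assoc, hs1, Nat.mul_succ]; omega
  have hex : ∃ k, i ≤ s k := ⟨i, hmono.id_le i⟩
  set k0 := Nat.find hex with hk0
  have hk0i : i ≤ s k0 := Nat.find_spec hex
  have htn : ∀ k, t k ≤ 1 + n := by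
    intro k
    have h1 : (t k : ℝ) ≤ 1 + n := by
      have := ht2 k
      have : ε * n ≤ 1 * n := by gcongr
      linarith
    exact_mod_cast h1
  have hk02 : s k0 ≤ i + 2 * n := by
    rcases Nat.eq_zero_or_pos k0 with h | h
    · rw [h, hs0]; omega
    · have h1 := Nat.find_min hex (m := k0 - 1) (by omega)
      have h2 := hs1 (k0 - 1)
      have h3 := htn (k0 - 1)
      rw [show k0 - 1 + 1 = k0 by omega] at h2
      omega
  have hend : i + n * M ≤ s (k0 + M) := by
    have := hgrow k0 M
    omega
  let B : Finset ℕ := ((Finset.Ico k0 (k0 + M)).image (fun k => s k - i)).filter (· < n * M)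
  have hmem : ∀ p, p ∈ B ↔ p < n * M ∧ ∃ k, s k = i + p := by
    intro p
    simp only [B, Finset.mem_filter, Finset.mem_image, Finset.mem_Ico]
    constructor
    · rintro ⟨⟨k, hk, rfl⟩, hp⟩
      have : s k0 ≤ s k := hmono.monotone hk.1
      exact ⟨hp, k, by omega⟩
    · rintro ⟨hp, k, hk⟩
      refine ⟨⟨k, ⟨Nat.find_min' hex (by omega), ?_⟩, by omega⟩, hp⟩
      by_contra hcon
      have : s (k0 + M) ≤ s k := hmono.monotone (not_lt.1 hcon)
      omega
  have hword : ∀ k j' j, k0 ≤ k → j' < n → j < n * M → s k + j' = i + j →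
      wrd f x B j = f^[j'] x := by
    intro k j' j hk hj' hj heq
    have hsk : s k0 ≤ s k := hmono.monotone hk
    have : Nat.findGreatest (· ∈ B) j = s k - i := by
      rw [Nat.findGreatest_eq_iff]
      refine ⟨by omega, fun _ => ?_, ?_⟩
      · rw [hmem]
        exact ⟨by omega, k, by omega⟩
      · intro p hp1 hp2 hp
        obtain ⟨_, k', hk'⟩ := (hmem p).1 hp
        have hlt : s k < s k' := by omega
        have h1 : k + 1 ≤ k' := hmono.lt_iff_lt.1 hlt
        have h2 : s (k + 1) ≤ s k' := hmono.monotone h1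
        rw [hs1] at h2
        omega
    have e4 : wrd f x B j = f^[j - Nat.findGreatest (· ∈ B) j] x := rfl
    rw [e4, this, show j - (s k - i) = j' by omega]
  set F : ℕ → ℝ := fun p => if i ≤ p ∧ p < i + n * M then
    min 1 (dist (f^[p] z) (wrd f x B (p - i))) else 0 with hF
  have hF0 : ∀ p, 0 ≤ F p := fun p => by
    simp only [hF]; split_ifs; exacts [le_min zero_le_one dist_nonneg, le_rfl]
  have hF1 : ∀ p, F p ≤ 1 := fun p => by
    simp only [hF]; split_ifs; exacts [min_le_left _ _, zero_le_one]
  have hblock : ∀ k, k0 ≤ k → ∑ p ∈ Finset.Ico (s k) (s (k + 1)), F p ≤ 3 * ε * n := by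
    intro k hk
    rw [Finset.sum_Ico_eq_sum_range, hs1, Nat.add_sub_cancel_left, Finset.sum_range_add]
    have h1 : ∑ j ∈ Finset.range n, F (s k + j) ≤ n * ε + ε * n := by
      calc ∑ j ∈ Finset.range n, F (s k + j) ≤ ∑ j ∈ Finset.range n,
            (ε + if ε < dist (f^[s k + j] z) (f^[j] x) then 1 else 0) := by
            refine Finset.sum_le_sum fun j hj => ?_
            have hj := Finset.mem_range.1 hj
            split_ifs with hlt
            · have := hF1 (s k + j); linarith
            · simp only [hF]
              split_ifs with hin
              · rw [hword k j (s k + j - i) hk hj (by omega) (by omega)]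
                have := min_le_right 1 (dist (f^[s k + j] z) (f^[j] x))
                linarith
              · linarith
        _ = n * ε + ((Finset.range n).filter
              (fun j => ε < dist (f^[s k + j] z) (f^[j] x))).card := by
            rw [Finset.sum_add_distrib, Finset.sum_boole]
            simp
        _ ≤ n * ε + ε * n := by
            have := htr k
            simp only [] at this
            linarith
    have h2 : ∑ j ∈ Finset.range (t k - 1), F (s k + (n + j)) ≤ ε * n := by
      refine (Finset.sum_le_sum fun p _ => hF1 _).trans ?_
      simp only [Finset.sum_const, Finset.card_range, nsmul_eq_mul, mul_one]
      rw [Nat.cast_sub (ht k)]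
      have := ht2 k
      push_cast
      linarith
    simp only [← add_assoc] at h2 ⊢
    linarith
  have hblocks : ∀ l : ℕ, ∑ p ∈ Finset.Ico (s k0) (s (k0 + l)), F p ≤ l * (3 * ε * n) := by
    intro l
    induction l with
    | zero => simp
    | succ l ih =>
      rw [← add_assoc, ← Finset.sum_Ico_consecutive F (hmono.monotone (by omega : k0 ≤ k0 + l))
        (hmono.monotone (by omega : k0 + l ≤ k0 + l + 1))]
      have := hblock (k0 + l) (by omega)
      push_cast
      linarith
  refine ⟨B, ?_, ?_, ?_⟩
  · intro p hp
    exact Finset.mem_range.2 ((hmem p).1 hp).1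
  · refine (Finset.card_filter_le _ _).trans (Finset.card_image_le.trans ?_)
    simp
  · calc ∑ p ∈ Finset.range (n * M), min 1 (dist (f^[p] (f^[i] z)) (wrd f x B p))
          = ∑ p ∈ Finset.Ico i (i + n * M), F p := by
          rw [Finset.sum_Ico_eq_sum_range, Nat.add_sub_cancel_left]
          refine Finset.sum_congr rfl fun p hp => ?_
          have hp := Finset.mem_range.1 hp
          simp only [hF]
          rw [if_pos ⟨by omega, by omega⟩, ← Function.iterate_add_apply, add_comm p i,
            Nat.add_sub_cancel_left]
      _ ≤ ∑ p ∈ Finset.Ico i (s (k0 + M)), F p :=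
          Finset.sum_le_sum_of_subset_of_nonneg (Finset.Ico_subset_Ico le_rfl hend)
            (fun i _ _ => hF0 _)
      _ = ∑ p ∈ Finset.Ico i (s k0), F p + ∑ p ∈ Finset.Ico (s k0) (s (k0 + M)), F p :=
          (Finset.sum_Ico_consecutive F hk0i (hmono.monotone (by omega))).symm
      _ ≤ 2 * n + M * (3 * ε * n) := by
          refine add_le_add ?_ (hblocks M)
          refine (Finset.sum_le_sum fun p _ => hF1 _).trans ?_
          simp only [Finset.sum_const, Nat.card_Ico, nsmul_eq_mul, mul_one]
          exact_mod_cast (by omega : s k0 - i ≤ 2 * n)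

/-- The main dichotomy. -/
theorem key_dichotomy [CompactSpace X] [MeasurableSpace X] [BorelSpace X]
    (f : X → X) (hf : Continuous f) (happ : ApproxProduct f) (x : X) (β ε₂ : ℝ) (hβ : 0 < β)
    (h0 : 0 < ε₂) (h1 : ε₂ ≤ 1)
    (hno : ¬ ∃ μ ν : Measure X, IsProbabilityMeasure μ ∧ IsProbabilityMeasure ν ∧
      Ergodic f μ ∧ Ergodic f ν ∧ μ ≠ ν) :
    ∃ m0 : ℕ, ∀ m : ℕ, m0 ≤ m → ∀ y : X, ∃ B E : Finset ℕ,
      B ⊆ Finset.range m ∧ E ⊆ Finset.range m ∧ (B.card + E.card : ℝ) ≤ β * m ∧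
      ∀ p < m, p ∉ E → dist (f^[p] y) (wrd f x B p) ≤ ε₂ := by
  classical
  set c : ℝ := min 1 (β * ε₂ / 8) with hc
  have hcpos : 0 < c := by positivity
  have hc1 : c ≤ 1 := min_le_left _ _
  have hc2 : c ≤ β * ε₂ / 8 := min_le_right _ _
  obtain ⟨M, hM⟩ := exists_nat_gt (4 / c)
  have hMpos : (0 : ℝ) < M := lt_trans (by positivity) hM
  have hM1 : 1 ≤ M := by exact_mod_cast hMpos
  have hM1' : (1 : ℝ) ≤ M := by exact_mod_cast hM1
  have hMc : 4 ≤ c * M := by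
    rw [div_lt_iff₀ hcpos] at hM; linarith
  obtain ⟨M', hM'⟩ := happ (c / 6) (c / 6) (c / 6) (by positivity) (by positivity) (by positivity)
  obtain ⟨n', hn'⟩ := exists_nat_gt (8 / β)
  set n := max (M' + 1) n' with hndef
  have hnM' : M' < n := lt_of_lt_of_le (Nat.lt_succ_self _) (le_max_left _ _)
  have hn : 0 < n := by omega
  have hnpos : (0 : ℝ) < n := by exact_mod_cast hn
  have hnβ : 8 ≤ β * n := by
    have : (n' : ℝ) ≤ n := by exact_mod_cast le_max_right _ _
    rw [div_lt_iff₀ hβ] at hn'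
    nlinarith
  obtain ⟨t, ht, ht2, z, htr⟩ := hM' n hnM' (fun _ => x)
  have hwin := window_bound f x z n M t hn (c / 6) (by positivity) (by linarith) ht ht2 htr
  set N := n * M with hN
  have hNpos : 0 < N := Nat.mul_pos hn hM1
  have hNpos' : (0 : ℝ) < N := by exact_mod_cast hNpos
  have hNreal : (N : ℝ) = n * M := by simp [hN]
  let 𝓑 : Finset (Finset ℕ) := (Finset.range N).powerset.filter (fun B => B.card ≤ M)
  have h𝓑 : 𝓑.Nonempty := ⟨∅, by simp [𝓑]⟩
  let G : Finset ℕ → X → ℝ := fun B y =>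
    ∑ p ∈ Finset.range N, min 1 (dist (f^[p] y) (wrd f x B p))
  have hGc : ∀ B, Continuous (G B) := fun B =>
    continuous_finsetSum _ fun p _ =>
      continuous_const.min ((hf.iterate p).dist continuous_const)
  have hG0 : ∀ B y, 0 ≤ G B y := fun B y =>
    Finset.sum_nonneg fun p _ => le_min zero_le_one dist_nonneg
  let ψ : C(X, ℝ) := ⟨fun y => 𝓑.inf' h𝓑 (fun B => G B y),
    Continuous.finset_inf'_apply h𝓑 fun B _ => hGc B⟩
  have hψ0 : ∀ y, 0 ≤ ψ y := fun y => Finset.le_inf' h𝓑 _ fun B _ => hG0 B y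
  have hψ : ∀ y, ∃ B : Finset ℕ, B.card ≤ M ∧
      ∑ p ∈ Finset.range N, min 1 (dist (f^[p] y) (wrd f x B p)) ≤ ψ y := by
    intro y
    obtain ⟨B, hB, he⟩ := Finset.exists_mem_eq_inf' h𝓑 (fun B => G B y)
    exact ⟨B, (Finset.mem_filter.1 hB).2, he.ge⟩
  have hz : ∀ i, ψ (f^[i] z) ≤ c * N := by
    intro i
    obtain ⟨B, hB1, hB2, hB3⟩ := hwin i
    refine (Finset.inf'_le (fun B => G B (f^[i] z))
      (Finset.mem_filter.2 ⟨Finset.mem_powerset.2 hB1, hB2⟩ : B ∈ 𝓑)).trans (hB3.trans ?_)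
    rw [hNreal]
    nlinarith
  by_cases hall : ∃ m1 : ℕ, ∀ m, m1 < m → ∀ y,
      ∑ i ∈ Finset.range m, ψ (f^[i] y) ≤ 2 * c * N * m
  · obtain ⟨m1, hm1⟩ := hall
    obtain ⟨m2, hm2⟩ := exists_nat_gt (2 * (M + 1 + 2 * N / ε₂) / β)
    refine ⟨max (m1 + 1) m2, fun m hm y => ?_⟩
    have hmm1 : m1 < m := lt_of_lt_of_le (Nat.lt_succ_self _) ((le_max_left _ _).trans hm)
    have hmm2 : (m2 : ℝ) ≤ m := by exact_mod_cast (le_max_right _ _).trans hm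
    obtain ⟨B, E, hB, hE, hBc, hEc, hd⟩ := concat_bound f x y N M m hNpos ψ hψ0 hψ (2 * c)
      (hm1 m hmm1 y) ε₂ h0 h1
    refine ⟨B, E, hB, hE, ?_, hd⟩
    have hm0 : (0 : ℝ) ≤ m := Nat.cast_nonneg m
    have e1 : (E.card : ℝ) ≤ 2 * N / ε₂ + β / 4 * m := by
      have : (E.card : ℝ) ≤ (2 * N + 2 * c * m) / ε₂ := by
        rw [le_div_iff₀ h0]; linarith
      refine this.trans ?_
      rw [add_div]
      gcongr
      rw [div_le_iff₀ h0]
      nlinarith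
    have e2 : (m / N + 1 : ℝ) * (M + 1) ≤ β / 4 * m + (M + 1) := by
      have : (m / N : ℝ) * (M + 1) ≤ β / 4 * m := by
        rw [div_mul_eq_mul_div, div_le_iff₀ hNpos', hNreal]
        have : (M + 1 : ℝ) ≤ β / 4 * (n * M) := by nlinarith
        nlinarith
      linarith
    have e3 : M + 1 + 2 * N / ε₂ ≤ β / 2 * m := by
      rw [div_lt_iff₀ hβ] at hm2
      nlinarith
    linarith
  · exfalso
    push Not at hall
    apply hno
    obtain ⟨μ, hμp, hμe, hμ⟩ := exists_ergodic_of_averages f hf ψ (2 * c * N) (fun k => by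
      obtain ⟨m, hm, y, hy⟩ := hall k
      exact ⟨m, hm, y, hy.le⟩)
    obtain ⟨ν, hνp, hνe, hν⟩ := exists_ergodic_of_averages f hf (-ψ) (-(c * N)) (fun k => by
      refine ⟨k + 1, Nat.lt_succ_self _, z, ?_⟩
      have : ∑ i ∈ Finset.range (k + 1), -(c * N) ≤ ∑ i ∈ Finset.range (k + 1),
          (-ψ) (f^[i] z) := Finset.sum_le_sum fun i _ => neg_le_neg (hz i)
      simpa [mul_comm] using this)
    refine ⟨μ, ν, hμp, hνp, hμe, hνe, ?_⟩
    rintro rfl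
    have e : ∫ x, (-ψ) x ∂μ = - ∫ x, ψ x ∂μ := by
      rw [← integral_neg]; rfl
    rw [e] at hν
    have : 0 < c * N := by positivity
    linarith

theorem exists_code (X : Type*) [MetricSpace X] [CompactSpace X] (ε : ℝ) (hε : 0 < ε) :
    ∃ (Q : ℕ) (q : X → Fin Q), ∀ u v, q u = q v → dist u v ≤ ε := by
  classical
  obtain ⟨T, -, hT, hcov⟩ := finite_cover_balls_of_compact (isCompact_univ (X := X))
    (half_pos hε)
  have : ∀ u : X, ∃ a : T, u ∈ Metric.ball (a : X) (ε / 2) := by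
    intro u
    have := hcov (Set.mem_univ u)
    simpa using this
  choose a ha using this
  have : Fintype T := hT.fintype
  refine ⟨Fintype.card T, fun u => Fintype.equivFin T (a u), fun u v huv => ?_⟩
  have e : a u = a v := (Fintype.equivFin T).injective huv
  have h1 := ha u
  have h2 := ha v
  rw [e] at h1
  rw [Metric.mem_ball] at h1 h2
  have := dist_triangle_right u v (a v : X)
  linarith

theorem exists_sep_of_topEnt_pos (f : X → X) (hpos : 0 < topEnt f) :
    ∃ ε₁ : ℝ, 0 < ε₁ ∧ ∃ h : ℝ, 0 < h ∧ ∀ m0 : ℕ, ∃ m, m0 ≤ m ∧ ∃ S : Finset X,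
      S.Nonempty ∧
      (∀ y ∈ S, ∀ y' ∈ S, y ≠ y' → ∃ j < m, ε₁ < dist (f^[j] y) (f^[j] y')) ∧
      h * m < Real.log S.card := by
  unfold topEnt at hpos
  simp only [lt_iSup_iff] at hpos
  obtain ⟨ε₁, hε₁, hent⟩ := hpos
  obtain ⟨h, hh0, hh⟩ := EReal.lt_iff_exists_real_btwn.1 hent
  have hh0' : 0 < h := by exact_mod_cast hh0
  refine ⟨ε₁, hε₁, h, hh0', fun m0 => ?_⟩
  have hfr := frequently_lt_of_lt_limsup (by isBoundedDefault) hh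
  obtain ⟨m, hm, hlt⟩ := (frequently_atTop.1 hfr) m0
  have hlt' : h < Real.log (sepNum f Set.univ m ε₁) / m := by exact_mod_cast hlt
  have hm0 : (0 : ℝ) < m := by
    rcases Nat.eq_zero_or_pos m with h' | h'
    · subst h'; simp at hlt'; linarith
    · exact_mod_cast h'
  rw [lt_div_iff₀ hm0] at hlt'
  have hne : sepNum f Set.univ m ε₁ ≠ 0 := by
    intro h'
    rw [h'] at hlt'
    have := mul_pos hh0' hm0
    simp at hlt'
    linarith
  have hbdd : BddAbove {c : ℕ | ∃ S : Finset X, (↑S : Set X) ⊆ Set.univ ∧ S.card = c ∧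
    ∀ y ∈ S, ∀ y' ∈ S, y ≠ y' → ∃ j < m, ε₁ < dist (f^[j] y) (f^[j] y')} := by
    by_contra hcon
    exact hne (Nat.sSup_of_not_bddAbove hcon)
  have hmem := Nat.sSup_mem (by exact ⟨0, ∅, by simp, by simp, by simp⟩) hbdd
  obtain ⟨S, -, hcard, hsep⟩ := hmem
  have hcard' : S.card = sepNum f Set.univ m ε₁ := hcard
  refine ⟨m, hm, S, ?_, hsep, by rw [hcard']; exact hlt'⟩
  rw [← Finset.card_pos]
  omega

/-- If a compact system with the approximate product property has strictly positive
topological entropy, then it admits at least two distinct ergodic invariant Borel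
probability measures. -/
theorem app_topEnt_pos_two_ergodic_measures
    {X : Type*} [MetricSpace X] [CompactSpace X] [MeasurableSpace X] [BorelSpace X]
    (f : X → X) (hf : Continuous f) (happ : ApproxProduct f)
    (hpos : 0 < topEnt f) :
    ∃ μ ν : Measure X, IsProbabilityMeasure μ ∧ IsProbabilityMeasure ν ∧
      Ergodic f μ ∧ Ergodic f ν ∧ μ ≠ ν := by
  by_contra hno
  obtain ⟨ε₁, hε₁, h, hh, hsep⟩ := exists_sep_of_topEnt_pos f hpos
  obtain ⟨_, _, S₀, ⟨x, _⟩, _⟩ := hsep 0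
  obtain ⟨Q, q, hq⟩ := exists_code X ε₁ hε₁
  set τ : ℝ := 4 * (Q + 1) / h with hτ
  have hτpos : 0 < τ := by positivity
  have hexp : (2 * (Q + 1) : ℝ) * Real.exp (-τ) ≤ h / 2 := by
    have h1 : τ ≤ Real.exp τ := by linarith [Real.add_one_le_exp τ]
    rw [Real.exp_neg, ← div_eq_mul_inv, div_le_iff₀ (Real.exp_pos _)]
    have h2 : h * τ = 4 * (Q + 1) := by rw [hτ]; field_simp
    nlinarith
  obtain ⟨m0, hm0⟩ := key_dichotomy f hf happ x (h / (2 * τ)) (min 1 (ε₁ / 2)) (by positivity)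
    (by positivity) (min_le_left _ _) hno
  obtain ⟨m, hm, S, hSne, hS, hlog⟩ := hsep m0
  have hb := sep_card_bound f m Q ε₁ q hq (wrd f x) (h / (2 * τ) * m) τ hτpos.le S hS
    (fun y => by
      obtain ⟨B, E, hB, hE, hc, hd⟩ := hm0 m hm y
      exact ⟨B, E, hB, hE, hc, fun p hp hpE => (hd p hp hpE).trans (min_le_right _ _)⟩)
  have hSpos : (0 : ℝ) < S.card := by exact_mod_cast Finset.card_pos.2 hSne
  have h3 := (Real.log_le_iff_le_exp hSpos).2 hb
  have h4 : τ * (h / (2 * τ) * m) = h / 2 * m := by field_simp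
  have h5 : (m : ℝ) * ((2 * (Q + 1) : ℝ) * Real.exp (-τ)) ≤ m * (h / 2) := by gcongr
  rw [h4] at h3
  linarith
end Defs
end

section
/- Let I = [a,b] be a compact interval of real numbers and f : I → I a continuous map. Then (I,f) has the approximate product property and zero topological entropy if and only if f has a unique attracting fixed point, i.e. there exists p ∈ I such that f(p) = p and for every x ∈ I, f^n(x) → p as n → ∞. -/
open MeasureTheory Filter Set

section Defs

variable {X : Type*} [MetricSpace X]

lemma aux_preconn {a b : ℝ} (u v : Set.Icc a b) : IsPreconnected (Set.Icc u v) := by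
  rw [← Topology.IsInducing.subtypeVal.isPreconnected_image]
  have : (Subtype.val '' (Set.Icc u v)) = Set.Icc (u : ℝ) (v : ℝ) := by
    ext x
    constructor
    · rintro ⟨y, hy, rfl⟩
      exact ⟨hy.1, hy.2⟩
    · intro hx
      exact ⟨⟨x, u.2.1.trans hx.1, hx.2.trans v.2.2⟩, ⟨hx.1, hx.2⟩, rfl⟩
  rw [this]
  exact isPreconnected_Icc

lemma aux_lt {a b : ℝ} (g : Set.Icc a b → Set.Icc a b) (hg : Continuous g)
    (p : Set.Icc a b) (h : ∀ x, g x = x → x = p) (u : Set.Icc a b) (hu : u < p) : u < g u := by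
  by_contra hcon
  have hab : a ≤ b := u.2.1.trans u.2.2
  let A : Set.Icc a b := ⟨a, le_refl a, hab⟩
  have hA : ∀ x : Set.Icc a b, A ≤ x := fun x => x.2.1
  obtain ⟨c, hc, hc'⟩ := (aux_preconn A u).intermediate_value₂ (f := fun x => x) (g := g)
    (a := A) (b := u) ⟨le_refl _, hA u⟩ ⟨hA u, le_refl _⟩ continuousOn_id hg.continuousOn
    (hA _) (not_lt.mp hcon)
  have := h c hc'.symm
  rw [this] at hc
  exact absurd hc.2 (not_le.mpr hu)

lemma aux_gt {a b : ℝ} (g : Set.Icc a b → Set.Icc a b) (hg : Continuous g)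
    (p : Set.Icc a b) (h : ∀ x, g x = x → x = p) (u : Set.Icc a b) (hu : p < u) : g u < u := by
  by_contra hcon
  have hab : a ≤ b := u.2.1.trans u.2.2
  let B : Set.Icc a b := ⟨b, hab, le_refl b⟩
  have hB : ∀ x : Set.Icc a b, x ≤ B := fun x => x.2.2
  obtain ⟨c, hc, hc'⟩ := (aux_preconn u B).intermediate_value₂ (f := fun x => x) (g := g)
    (a := u) (b := B) ⟨le_refl _, hB u⟩ ⟨hB u, le_refl _⟩ continuousOn_id hg.continuousOn
    (not_lt.mp hcon) (hB _)
  have := h c hc'.symm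
  rw [this] at hc
  exact absurd hc.1 (not_le.mpr hu)

lemma aux_fix {a b : ℝ} (hab : a ≤ b) (g : Set.Icc a b → Set.Icc a b) (hg : Continuous g) :
    ∃ p, g p = p := by
  let A : Set.Icc a b := ⟨a, le_refl a, hab⟩
  let B : Set.Icc a b := ⟨b, hab, le_refl b⟩
  have hA : ∀ x : Set.Icc a b, A ≤ x := fun x => x.2.1
  have hB : ∀ x : Set.Icc a b, x ≤ B := fun x => x.2.2
  obtain ⟨c, hc, hc'⟩ := (aux_preconn A B).intermediate_value₂ (f := fun x => x) (g := g)
    (a := A) (b := B) ⟨le_refl _, hA _⟩ ⟨hA _, le_refl _⟩ continuousOn_id hg.continuousOn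
    (hA _) (hB _)
  exact ⟨c, hc'.symm⟩

lemma aux_unif {a b : ℝ} (f : Set.Icc a b → Set.Icc a b) (hf : Continuous f)
    (p : Set.Icc a b) (hp : f p = p) (h2 : ∀ x, f (f x) = x → x = p) (ε : ℝ) (hε : 0 < ε) :
    ∃ N, ∀ n ≥ N, ∀ x, dist (f^[n] x) p < ε := by
  have h1 : ∀ x, f x = x → x = p := fun x hx => h2 x (by rw [hx, hx])
  have hf2 : Continuous (fun x => f (f x)) := hf.comp hf
  have hit : ∀ n, f^[n] p = p := fun n => Function.iterate_fixed hp n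
  have hcomp : ∀ n, IsCompact (range f^[n]) := fun n => isCompact_range (hf.iterate n)
  have hanti : Antitone (fun n => range f^[n]) := by
    refine antitone_nat_of_succ_le fun n => ?_
    rintro _ ⟨x, rfl⟩
    exact ⟨f x, rfl⟩
  set J := ⋂ n, range f^[n] with hJ
  have hpJ : p ∈ J := mem_iInter.mpr fun n => ⟨p, hit n⟩
  have hJc : IsCompact J := (isClosed_iInter fun n => (hcomp n).isClosed).isCompact
  have hpre : ∀ x ∈ J, ∃ y ∈ J, f y = x := by
    intro x hx
    have : (⋂ n, (f ⁻¹' {x} ∩ range f^[n])).Nonempty := by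
      apply IsCompact.nonempty_iInter_of_sequence_nonempty_isCompact_isClosed
      · intro n
        exact inter_subset_inter_right _ (hanti (Nat.le_succ n))
      · intro n
        obtain ⟨y, hy⟩ := mem_iInter.mp hx (n + 1)
        rw [Function.iterate_succ_apply'] at hy
        exact ⟨f^[n] y, hy, y, rfl⟩
      · exact ((isClosed_singleton.preimage hf).inter (hcomp 0).isClosed).isCompact
      · intro n
        exact (isClosed_singleton.preimage hf).inter (hcomp n).isClosed
    obtain ⟨y, hy⟩ := this
    rw [mem_iInter] at hy
    exact ⟨y, mem_iInter.mpr fun n => (hy n).2, (hy 0).1⟩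
  obtain ⟨c, hcJ, hc⟩ := hJc.exists_isLeast ⟨p, hpJ⟩
  obtain ⟨d, hdJ, hd⟩ := hJc.exists_isGreatest ⟨p, hpJ⟩
  obtain ⟨x, hxJ, hx⟩ := hpre c hcJ
  obtain ⟨y, hyJ, hy⟩ := hpre d hdJ
  have hx' : c < p → p < x := by
    intro hcp
    rcases lt_trichotomy x p with h | h | h
    · have := aux_lt f hf p h1 x h
      rw [hx] at this
      exact absurd (hc hxJ) (not_le.mpr this)
    · rw [h, hp] at hx
      exact absurd hx hcp.ne'
    · exact h
  have hy' : p < d → y < p := by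
    intro hcp
    rcases lt_trichotomy y p with h | h | h
    · exact h
    · rw [h, hp] at hy
      exact absurd hy hcp.ne
    · have := aux_gt f hf p h1 y h
      rw [hy] at this
      exact absurd (hd hyJ) (not_le.mpr this)
  have hkey : ¬ (c < p ∧ p < d) := by
    rintro ⟨hcp, hpd⟩
    have hpx := hx' hcp
    have hyp := hy' hpd
    obtain ⟨w, hw, hw'⟩ := (aux_preconn y p).intermediate_value₂ (f := fun _ => x) (g := f)
      (a := y) (b := p) ⟨le_refl _, hyp.le⟩ ⟨hyp.le, le_refl _⟩ continuousOn_const hf.continuousOn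
      (by rw [hy]; exact hd hxJ) (by rw [hp]; exact hpx.le)
    have hwp : w < p := by
      refine lt_of_le_of_ne hw.2 ?_
      rintro rfl
      rw [hp] at hw'
      exact absurd hw' hpx.ne'
    have h3 := aux_lt _ hf2 p h2 w hwp
    simp only [← hw', hx] at h3
    exact absurd ((hc hyJ).trans hw.1) (not_le.mpr h3)
  have hcp : c = p := by
    refine le_antisymm (hc hpJ) (not_lt.mp fun h => hkey ⟨h, (hx' h).trans_le (hd hxJ)⟩)
  have hdp : d = p := by
    refine le_antisymm (not_lt.mp fun h => hkey ⟨(hc hyJ).trans_lt (hy' h), h⟩) (hd hpJ)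
  have hJp : ∀ z ∈ J, z = p := fun z hz =>
    le_antisymm (hdp ▸ hd hz) (hcp ▸ hc hz)
  obtain ⟨N, hN⟩ := exists_subset_nhds_of_isCompact' (V := fun n => range f^[n])
    hanti.directed_ge hcomp (fun n => (hcomp n).isClosed) (U := Metric.ball p ε)
    (fun z hz => by rw [hJp z hz]; exact Metric.ball_mem_nhds p hε)
  exact ⟨N, fun n hn x => hN (hanti hn ⟨x, rfl⟩)⟩

lemma aux_app {f : X → X} {p : X}
    (h : ∀ ε : ℝ, 0 < ε → ∃ N, ∀ n ≥ N, ∀ x, dist (f^[n] x) p < ε) : ApproxProduct f := by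
  intro δ₁ δ₂ ε h1 h2 hε
  obtain ⟨N, hN⟩ := h (ε / 2) (half_pos hε)
  obtain ⟨M, hM⟩ := exists_nat_gt (N / δ₂)
  refine ⟨M, fun n hn C => ⟨fun _ => 1, fun _ => one_pos, fun k => ?_, C 0, fun k => ?_⟩⟩
  · have : 0 ≤ δ₁ * n := by positivity
    push_cast
    linarith
  · have hsub : ((Finset.range n).filter
      (fun j => ε < dist (f^[segStart (fun _ => n) (fun _ => 1) k + j] (C 0)) (f^[j] (C k))))
        ⊆ Finset.range N := by
      intro j hj
      rw [Finset.mem_filter] at hj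
      rw [Finset.mem_range]
      by_contra hc
      have e1 := hN (segStart (fun _ => n) (fun _ => 1) k + j) (by omega) (C 0)
      have e2 := hN j (by omega) (C k)
      have := dist_triangle_right (f^[segStart (fun _ => n) (fun _ => 1) k + j] (C 0))
        (f^[j] (C k)) p
      linarith [hj.2]
    have hcard := Finset.card_le_card hsub
    rw [Finset.card_range] at hcard
    have hcard' : ((Finset.card ((Finset.range n).filter
      (fun j => ε < dist (f^[segStart (fun _ => n) (fun _ => 1) k + j] (C 0)) (f^[j] (C k))))
      : ℕ) : ℝ) ≤ N := by exact_mod_cast hcard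
    refine hcard'.trans ?_
    rw [div_lt_iff₀ h2] at hM
    have : (M : ℝ) < n := by exact_mod_cast hn
    nlinarith

lemma aux_ent {f : X → X} {p : X}
    (h : ∀ ε : ℝ, 0 < ε → ∃ N, ∀ n ≥ N, ∀ x, dist (f^[n] x) p < ε) : topEnt f = 0 := by
  have key : ∀ ε : ℝ, 0 < ε → entScale f Set.univ ε = 0 := by
    intro ε hε
    obtain ⟨N, hN⟩ := h (ε / 2) (half_pos hε)
    have hconst : ∀ n ≥ N, sepNum f Set.univ n ε = sepNum f Set.univ N ε := by
      intro n hn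
      unfold sepNum
      congr 1
      ext c
      constructor
      · rintro ⟨S, h1, h2, h3⟩
        refine ⟨S, h1, h2, fun y hy y' hy' hne => ?_⟩
        obtain ⟨j, hj, hd⟩ := h3 y hy y' hy' hne
        refine ⟨j, ?_, hd⟩
        by_contra hc
        have e1 := hN j (by omega) y
        have e2 := hN j (by omega) y'
        have := dist_triangle_right (f^[j] y) (f^[j] y') p
        linarith
      · rintro ⟨S, h1, h2, h3⟩
        refine ⟨S, h1, h2, fun y hy y' hy' hne => ?_⟩
        obtain ⟨j, hj, hd⟩ := h3 y hy y' hy' hne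
        exact ⟨j, by omega, hd⟩
    have ht : Tendsto (fun n : ℕ => ((Real.log (sepNum f Set.univ n ε) / n : ℝ) : EReal))
        atTop (nhds ((0 : ℝ) : EReal)) := by
      refine (continuous_coe_real_ereal.tendsto 0).comp ?_
      refine (tendsto_const_div_atTop_nhds_zero_nat
        (Real.log (sepNum f Set.univ N ε))).congr' ?_
      filter_upwards [eventually_ge_atTop N] with n hn
      rw [hconst n hn]
    simpa [entScale] using ht.limsup_eq
  unfold topEnt
  apply le_antisymm
  · exact iSup₂_le fun ε hε => (key ε hε).le
  · exact (key 1 one_pos).ge.trans (le_iSup₂ (f := fun (ε : ℝ) (_ : 0 < ε) => entScale f Set.univ ε) 1 one_pos)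

lemma aux_bdd [CompactSpace X] {f : X → X} (hf : Continuous f) (n : ℕ) (ε : ℝ) (hε : 0 < ε) :
    BddAbove {c : ℕ | ∃ S : Finset X, ↑S ⊆ (Set.univ : Set X) ∧ S.card = c ∧
      ∀ y ∈ S, ∀ y' ∈ S, y ≠ y' → ∃ j < n, ε < dist (f^[j] y) (f^[j] y')} := by
  have hU : ∀ x : X, {y | ∀ j ∈ Finset.range n, dist (f^[j] y) (f^[j] x) < ε / 2} ∈ nhds x := by
    intro x
    have : ∀ᶠ y in nhds x, ∀ j ∈ Finset.range n, dist (f^[j] y) (f^[j] x) < ε / 2 := by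
      rw [Filter.eventually_all_finset]
      intro j _
      exact (hf.iterate j).continuousAt.eventually (Metric.ball_mem_nhds _ (half_pos hε))
    exact this
  obtain ⟨T, hT⟩ := CompactSpace.elim_nhds_subcover _ hU
  refine ⟨T.card, ?_⟩
  rintro c ⟨S, -, rfl, hS⟩
  have hex : ∀ y : X, ∃ x ∈ T, ∀ j ∈ Finset.range n, dist (f^[j] y) (f^[j] x) < ε / 2 := by
    intro y
    have : y ∈ (⊤ : Set X) := trivial
    rw [← hT] at this
    simpa using this
  choose g hg hg' using hex
  refine Finset.card_le_card_of_injOn g (fun y _ => hg y) ?_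
  intro y hy y' hy' heq
  by_contra hne
  obtain ⟨j, hj, hd⟩ := hS y hy y' hy' hne
  have e1 := hg' y j (Finset.mem_range.mpr hj)
  have e2 := hg' y' j (Finset.mem_range.mpr hj)
  rw [heq] at e1
  have := dist_triangle_right (f^[j] y) (f^[j] y') (f^[j] (g y'))
  linarith

lemma aux_common_le (r s s' : ℕ) (hr : 0 < r) (B B' : Finset ℕ) (hB : B.card ≤ r)
    (hB' : B'.card ≤ r) (h : s ≤ s') (h' : s' ≤ s + 5 * r) :
    ∃ j j', j < 16 * r ∧ j' < 16 * r ∧ s + j = s' + j' ∧ j ∉ B ∧ j' ∉ B' := by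
  obtain ⟨j', hj, hj'⟩ := Finset.exists_mem_notMem_of_card_lt_card
    (s := B' ∪ B.image (fun j => j - (s' - s))) (t := Finset.range (11 * r)) (by
      rw [Finset.card_range]
      have h1 := Finset.card_union_le B' (B.image (fun j => j - (s' - s)))
      have h2 := Finset.card_image_le (s := B) (f := fun j => j - (s' - s))
      omega)
  rw [Finset.mem_range] at hj
  rw [Finset.mem_union, not_or, Finset.mem_image] at hj'
  refine ⟨j' + (s' - s), j', by omega, by omega, by omega, fun hm => ?_, hj'.1⟩
  exact hj'.2 ⟨_, hm, by omega⟩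

lemma aux_common (r s s' : ℕ) (hr : 0 < r) (B B' : Finset ℕ) (hB : B.card ≤ r)
    (hB' : B'.card ≤ r) (h : s ≤ s' + 5 * r) (h' : s' ≤ s + 5 * r) :
    ∃ j j', j < 16 * r ∧ j' < 16 * r ∧ s + j = s' + j' ∧ j ∉ B ∧ j' ∉ B' := by
  rcases le_total s s' with hs | hs
  · exact aux_common_le r s s' hr B B' hB hB' hs h'
  · obtain ⟨j, j', h1, h2, h3, h4, h5⟩ := aux_common_le r s' s hr B' B hB' hB hs h
    exact ⟨j', j, h2, h1, h3.symm, h5, h4⟩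

def auxQ (r : ℕ) (t : ℕ → ℕ) (i : ℕ) : ℕ :=
  (segStart (fun _ => 16 * r) t (2 * i) - 32 * r * i) / (4 * r)

lemma aux_seg_succ (r : ℕ) (t : ℕ → ℕ) (k : ℕ) :
    segStart (fun _ => 16 * r) t (k + 1) = segStart (fun _ => 16 * r) t k + (16 * r + t k - 1) := by
  simp [segStart, Finset.sum_range_succ]

lemma aux_seg_ge (r : ℕ) (t : ℕ → ℕ) (ht : ∀ k, 0 < t k) (k : ℕ) :
    16 * r * k ≤ segStart (fun _ => 16 * r) t k := by
  induction k with
  | zero => simp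
  | succ k ih =>
    rw [aux_seg_succ]
    have := ht k
    rw [Nat.mul_succ]
    omega

lemma aux_seg_le (r : ℕ) (t : ℕ → ℕ) (ht' : ∀ k, t k ≤ 1 + r) (k : ℕ) :
    segStart (fun _ => 16 * r) t k ≤ 17 * r * k := by
  induction k with
  | zero => simp [segStart]
  | succ k ih =>
    rw [aux_seg_succ]
    have := ht' k
    rw [Nat.mul_succ]
    omega

lemma auxQ_succ (r : ℕ) (hr : 0 < r) (t : ℕ → ℕ) (ht : ∀ k, 0 < t k) (ht' : ∀ k, t k ≤ 1 + r)
    (i : ℕ) : auxQ r t (i + 1) = auxQ r t i ∨ auxQ r t (i + 1) = auxQ r t i + 1 := by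
  unfold auxQ
  have e1 := aux_seg_succ r t (2 * i)
  have e2 := aux_seg_succ r t (2 * i + 1)
  have e3 := aux_seg_ge r t ht (2 * i)
  have h1 := ht (2 * i)
  have h2 := ht (2 * i + 1)
  have h1' := ht' (2 * i)
  have h2' := ht' (2 * i + 1)
  have e4 : 16 * r * (2 * i) = 32 * r * i := by ring
  have e5 : 32 * r * (i + 1) = 32 * r * i + 32 * r := by ring
  have e6 : 2 * (i + 1) = 2 * i + 1 + 1 := by ring
  rw [e6, e5]
  rw [e4] at e3
  set D := segStart (fun _ => 16 * r) t (2 * i) - 32 * r * i with hD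
  set D' := segStart (fun _ => 16 * r) t (2 * i + 1 + 1) - (32 * r * i + 32 * r) with hD'
  have l1 : D ≤ D' := by omega
  have l2 : D' ≤ D + 4 * r := by omega
  have q1 : D / (4 * r) ≤ D' / (4 * r) := Nat.div_le_div_right l1
  have q2 : D' / (4 * r) ≤ (D + 4 * r) / (4 * r) := Nat.div_le_div_right l2
  rw [Nat.add_div_right _ (by omega)] at q2
  omega

lemma auxQ_eq (r : ℕ) (hr : 0 < r) (t u : ℕ → ℕ) (ht : ∀ k, 0 < t k) (ht' : ∀ k, t k ≤ 1 + r)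
    (hu : ∀ k, 0 < u k) (hu' : ∀ k, u k ≤ 1 + r) (m : ℕ)
    (h : ∀ i < m, (auxQ r t (i + 1) = auxQ r t i ↔ auxQ r u (i + 1) = auxQ r u i)) :
    ∀ i ≤ m, auxQ r t i = auxQ r u i := by
  intro i
  induction i with
  | zero => intro _; simp [auxQ, segStart]
  | succ i ih =>
    intro hi
    have h0 := ih (by omega)
    have h1 := h i (by omega)
    have h2 := auxQ_succ r hr t ht ht' i
    have h3 := auxQ_succ r hr u hu hu' i
    omega

lemma aux_close (r : ℕ) (hr : 0 < r) (t u : ℕ → ℕ) (ht : ∀ k, 0 < t k) (ht' : ∀ k, t k ≤ 1 + r)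
    (hu : ∀ k, 0 < u k) (hu' : ∀ k, u k ≤ 1 + r) (m : ℕ)
    (h : ∀ i < m, (auxQ r t (i + 1) = auxQ r t i ↔ auxQ r u (i + 1) = auxQ r u i))
    (k : ℕ) (hk : k < 2 * m) :
    segStart (fun _ => 16 * r) t k ≤ segStart (fun _ => 16 * r) u k + 5 * r := by
  have key : ∀ i ≤ m, segStart (fun _ => 16 * r) t (2 * i) ≤
      segStart (fun _ => 16 * r) u (2 * i) + 4 * r := by
    intro i hi
    have hq := auxQ_eq r hr t u ht ht' hu hu' m h i hi
    unfold auxQ at hq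
    have g1 := aux_seg_ge r t ht (2 * i)
    have g2 := aux_seg_ge r u hu (2 * i)
    have e4 : 16 * r * (2 * i) = 32 * r * i := by ring
    rw [e4] at g1 g2
    set D := segStart (fun _ => 16 * r) t (2 * i) - 32 * r * i with hD
    set E := segStart (fun _ => 16 * r) u (2 * i) - 32 * r * i with hE
    have a1 := Nat.div_add_mod D (4 * r)
    have a2 := Nat.div_add_mod E (4 * r)
    have a3 := Nat.mod_lt D (show 4 * r > 0 by omega)
    rw [hq] at a1
    omega
  obtain ⟨i, rfl | rfl⟩ := Nat.even_or_odd' k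
  · have := key i (by omega)
    omega
  · have := key i (by omega)
    rw [aux_seg_succ, aux_seg_succ]
    have h1 := ht' (2 * i)
    have h2 := hu (2 * i)
    omega

/-- two distinct periodic pieces give exponentially many separated points -/
lemma aux_sep [CompactSpace X] {f : X → X} (hf : Continuous f) (happ : ApproxProduct f)
    (p q : X) (ρ : ℝ) (hρ : 0 < ρ) (hpq : ∀ i j, ρ ≤ dist (f^[i] p) (f^[j] q)) :
    ∃ r : ℕ, 0 < r ∧ ∀ m : ℕ, 2 ^ m ≤ sepNum f Set.univ (34 * r * m) (ρ / 4) := by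
  classical
  obtain ⟨M, hM⟩ := happ (1 / 16) (1 / 16) (ρ / 4) (by norm_num) (by norm_num) (by linarith)
  set r := M + 1 with hr
  refine ⟨r, by omega, fun m => ?_⟩
  let C : (Fin (2 * m) → Bool) → ℕ → X := fun w k =>
    if h : k < 2 * m then (if w ⟨k, h⟩ then p else q) else p
  have hex := fun w => hM (16 * r) (by omega) (C w)
  choose t ht ht'0 z hz using hex
  have ht' : ∀ w k, t w k ≤ 1 + r := by
    intro w k
    have := ht'0 w k
    push_cast at this
    have h2 : (t w k : ℝ) ≤ 1 + (r : ℝ) := by linarith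
    exact_mod_cast h2
  let c : (Fin (2 * m) → Bool) → (Fin m → Bool) := fun w i =>
    decide (auxQ r (t w) (i + 1) = auxQ r (t w) i)
  let Bad : (Fin (2 * m) → Bool) → ℕ → Finset ℕ := fun w k => (Finset.range (16 * r)).filter
      (fun j => ρ / 4 < dist (f^[segStart (fun _ => 16 * r) (t w) k + j] (z w)) (f^[j] (C w k)))
  have hBad : ∀ w k, (Bad w k).card ≤ r := by
    intro w k
    have := hz w k
    push_cast at this
    have h2 : ((Bad w k).card : ℝ) ≤ (r : ℝ) := by
      refine this.trans (le_of_eq ?_)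
      ring
    exact_mod_cast h2
  have hgood : ∀ w k j, j < 16 * r → j ∉ Bad w k →
      dist (f^[segStart (fun _ => 16 * r) (t w) k + j] (z w)) (f^[j] (C w k)) ≤ ρ / 4 := by
    intro w k j hj hb
    by_contra hcon
    exact hb (Finset.mem_filter.mpr ⟨Finset.mem_range.mpr hj, not_le.mp hcon⟩)
  have hsep : ∀ w w', c w = c w' → w ≠ w' →
      ∃ j < 34 * r * m, ρ / 4 < dist (f^[j] (z w)) (f^[j] (z w')) := by
    intro w w' hc hne
    have hiff : ∀ i < m, (auxQ r (t w) (i + 1) = auxQ r (t w) i ↔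
        auxQ r (t w') (i + 1) = auxQ r (t w') i) := by
      intro i hi
      have := congrFun hc ⟨i, hi⟩
      simpa [c] using this
    obtain ⟨⟨k, hk⟩, hkne⟩ := Function.ne_iff.mp hne
    have c1 := aux_close r (by omega) (t w) (t w') (ht w) (ht' w) (ht w') (ht' w') m hiff k hk
    have c2 := aux_close r (by omega) (t w') (t w) (ht w') (ht' w') (ht w) (ht' w) m
      (fun i hi => (hiff i hi).symm) k hk
    obtain ⟨j, j', hj, hj', hjj, hb, hb'⟩ := aux_common r _ _ (by omega) (Bad w k) (Bad w' k)
      (hBad w k) (hBad w' k) c1 c2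
    refine ⟨segStart (fun _ => 16 * r) (t w) k + j, ?_, ?_⟩
    · have h1 := aux_seg_le r (t w) (ht' w) k
      have h2 : 17 * r * (k + 1) ≤ 17 * r * (2 * m) := Nat.mul_le_mul_left _ hk
      have h3 : 17 * r * (2 * m) = 34 * r * m := by ring
      rw [Nat.mul_succ, h3] at h2
      omega
    · have d1 := hgood w k j hj hb
      have d2 := hgood w' k j' hj' hb'
      rw [← hjj] at d2
      have d3 : ρ ≤ dist (f^[j] (C w k)) (f^[j'] (C w' k)) := by
        simp only [C, hk, dif_pos]
        cases hw : w ⟨k, hk⟩ <;> cases hw' : w' ⟨k, hk⟩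
        · exact absurd (hw.trans hw'.symm) hkne
        · simpa [dist_comm] using hpq j' j
        · simpa using hpq j j'
        · exact absurd (hw.trans hw'.symm) hkne
      by_contra hcon
      rw [not_lt] at hcon
      set u := f^[segStart (fun _ => 16 * r) (t w) k + j] (z w)
      set u' := f^[segStart (fun _ => 16 * r) (t w) k + j] (z w')
      have t1 := dist_triangle4 (f^[j] (C w k)) u u' (f^[j'] (C w' k))
      rw [dist_comm (f^[j] (C w k)) u] at t1
      linarith
  obtain ⟨y, -, hy⟩ := Finset.exists_le_card_fiber_of_mul_le_card_of_maps_to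
    (s := (Finset.univ : Finset (Fin (2 * m) → Bool))) (t := (Finset.univ : Finset (Fin m → Bool)))
    (f := c) (n := 2 ^ m) (fun _ _ => Finset.mem_univ _) Finset.univ_nonempty (by
      simp [Finset.card_univ, two_mul, pow_add])
  set F := (Finset.univ : Finset (Fin (2 * m) → Bool)).filter (fun x => c x = y) with hF
  have hFc : ∀ w ∈ F, c w = y := fun w hw => (Finset.mem_filter.mp hw).2
  have hinj : Set.InjOn z F := by
    intro w hw w' hw' heq
    by_contra hne
    obtain ⟨j, -, hj⟩ := hsep w w' ((hFc w hw).trans (hFc w' hw').symm) hne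
    rw [heq, dist_self] at hj
    linarith
  refine hy.trans ?_
  unfold sepNum
  refine le_csSup (aux_bdd hf _ _ (by linarith)) ⟨F.image z, subset_univ _,
    Finset.card_image_of_injOn hinj, ?_⟩
  intro v hv v' hv' hne
  obtain ⟨w, hw, rfl⟩ := Finset.mem_image.mp hv
  obtain ⟨w', hw', rfl⟩ := Finset.mem_image.mp hv'
  exact hsep w w' ((hFc w hw).trans (hFc w' hw').symm) (fun h => hne (by rw [h]))

lemma aux_pos [CompactSpace X] {f : X → X} (hf : Continuous f) (happ : ApproxProduct f)
    (p q : X) (ρ : ℝ) (hρ : 0 < ρ) (hpq : ∀ i j, ρ ≤ dist (f^[i] p) (f^[j] q)) :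
    0 < topEnt f := by
  obtain ⟨r, hr, hm⟩ := aux_sep hf happ p q ρ hρ hpq
  have hrR : (0 : ℝ) < r := by exact_mod_cast hr
  have hpos : (0 : ℝ) < Real.log 2 / (34 * r) := by
    have := Real.log_pos (one_lt_two)
    positivity
  have h1 : ((Real.log 2 / (34 * r) : ℝ) : EReal) ≤ entScale f Set.univ (ρ / 4) := by
    unfold entScale
    refine le_limsup_of_frequently_le ?_ (by isBoundedDefault)
    rw [frequently_atTop]
    intro N
    refine ⟨34 * r * (N + 1), by nlinarith, ?_⟩
    rw [EReal.coe_le_coe_iff]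
    have h2 : ((2 : ℝ) ^ (N + 1)) ≤ sepNum f Set.univ (34 * r * (N + 1)) (ρ / 4) := by
      exact_mod_cast hm (N + 1)
    have h3 := Real.log_le_log (by positivity) h2
    rw [Real.log_pow] at h3
    push_cast at h3 ⊢
    rw [div_le_div_iff₀ (by positivity) (by positivity)]
    nlinarith
  calc (0 : EReal) < ((Real.log 2 / (34 * r) : ℝ) : EReal) := by exact_mod_cast hpos
    _ ≤ _ := h1
    _ ≤ topEnt f := le_iSup₂ (f := fun (ε : ℝ) (_ : 0 < ε) => entScale f Set.univ ε)
      (ρ / 4) (by linarith)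

/-- **Theorem 1.5 (Sun).** A continuous map of a compact interval has the approximate
product property and zero topological entropy if and only if it has a unique
attracting fixed point: some `p` with `f p = p` and `f^[n] x → p` for every `x`. -/
theorem interval_app_zero_entropy_iff_attracting_fixed_point
    (a b : ℝ) (hab : a ≤ b) (f : Set.Icc a b → Set.Icc a b) (hf : Continuous f) :
    (ApproxProduct f ∧ topEnt f = 0) ↔
      ∃ p : Set.Icc a b, f p = p ∧
        ∀ x : Set.Icc a b, Tendsto (fun n => f^[n] x) atTop (nhds p) := by
  constructor
  · rintro ⟨happ, hent⟩
    obtain ⟨p, hp⟩ := aux_fix hab f hf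
    have h2 : ∀ x, f (f x) = x → x = p := by
      intro q hq
      by_contra hne
      have hne' : f q ≠ p := fun h => hne (by rw [← hq, h, hp])
      have hpos : 0 < min (dist p q) (dist p (f q)) :=
        lt_min (dist_pos.mpr (Ne.symm hne)) (dist_pos.mpr (Ne.symm hne'))
      have horb : ∀ j, f^[j] q = q ∨ f^[j] q = f q := by
        intro j
        induction j with
        | zero => exact Or.inl rfl
        | succ j ih =>
          rw [Function.iterate_succ_apply']
          rcases ih with h | h
          · right; rw [h]
          · left; rw [h, hq]
      have := aux_pos hf happ p q _ hpos (fun i j => by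
        rw [Function.iterate_fixed hp i]
        rcases horb j with h | h
        · rw [h]; exact min_le_left _ _
        · rw [h]; exact min_le_right _ _)
      rw [hent] at this
      exact lt_irrefl _ this
    refine ⟨p, hp, fun x => Metric.tendsto_atTop.mpr fun ε hε => ?_⟩
    obtain ⟨N, hN⟩ := aux_unif f hf p hp h2 ε hε
    exact ⟨N, fun n hn => hN n hn x⟩
  · rintro ⟨p, hp, hlim⟩
    have h2 : ∀ x, f (f x) = x → x = p := by
      intro x hx
      have h1 : Tendsto (fun n : ℕ => f^[2 * n] x) atTop (nhds p) :=
        (hlim x).comp (tendsto_id.const_mul_atTop' (by norm_num : 0 < 2))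
      have h3 : ∀ n : ℕ, f^[2 * n] x = x := by
        intro n
        rw [Function.iterate_mul]
        exact Function.iterate_fixed (by exact hx) n
      simp only [h3] at h1
      exact tendsto_nhds_unique tendsto_const_nhds h1
    have hu := aux_unif f hf p hp h2
    exact ⟨aux_app hu, aux_ent hu⟩
end Defs
end

section
/- Let (X,d) be a compact metric space and f : X → X a continuous map such that (X,f) has the approximate product property. Then for every f-invariant Borel probability measure μ on X, every open neighborhood U of μ in the weak-* topology on Borel probability measures, and every ε > 0 and β > 0, there exists a nonempty compact set Λ ⊆ X with f(Λ) ⊆ Λ such that: (i) every f-invariant Borel probability measure ν with ν(Λ) = 1 belongs to U, and (ii) h(Λ,f,ε) < β, where h(Λ,f,ε) = limsup_{n→∞} (1/n) log s(Λ,n,ε). -/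
open MeasureTheory Filter Set

section Defs

variable {X : Type*} [MetricSpace X]

open scoped BoundedContinuousFunction Topology

lemma aux_nhds {X : Type*} [MetricSpace X] [CompactSpace X] [MeasurableSpace X] [BorelSpace X]
    (μ : ProbabilityMeasure X) (U : Set (ProbabilityMeasure X)) (hU : IsOpen U) (hμU : μ ∈ U) :
    ∃ I : Finset (X →ᵇ ℝ), ∃ η : ℝ, 0 < η ∧ ∀ ν : ProbabilityMeasure X,
      (∀ φ ∈ I, |∫ x, φ x ∂(ν : Measure X) - ∫ x, φ x ∂(μ : Measure X)| ≤ η) → ν ∈ U := by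
  classical
  let F : ProbabilityMeasure X → (X →ᵇ ℝ) → ℝ := fun ν φ => ∫ x, φ x ∂(ν : Measure X)
  have h1 : Tendsto (id : ProbabilityMeasure X → _) (comap F (𝓝 (F μ))) (𝓝 μ) := by
    rw [ProbabilityMeasure.tendsto_iff_forall_integral_tendsto]
    intro φ
    have : Tendsto F (comap F (𝓝 (F μ))) (𝓝 (F μ)) := tendsto_comap
    exact (tendsto_pi_nhds.1 this) φ
  have h2 : U ∈ comap F (𝓝 (F μ)) := h1 (hU.mem_nhds hμU)
  obtain ⟨V, hV, hVU⟩ := h2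
  rw [nhds_pi, Filter.mem_pi] at hV
  obtain ⟨I, hI, t, ht, hsub⟩ := hV
  have h3 : ∀ φ, ∃ η > 0, Metric.closedBall (F μ φ) η ⊆ t φ := fun φ =>
    Metric.nhds_basis_closedBall.mem_iff.1 (ht φ)
  choose e he hes using h3
  have h4 : ∀ J : Finset (X →ᵇ ℝ), ∃ η : ℝ, 0 < η ∧ ∀ φ ∈ J, η ≤ e φ := by
    intro J
    induction J using Finset.induction_on with
    | empty => exact ⟨1, one_pos, by simp⟩
    | insert a J _ ih =>
      obtain ⟨η, h, h'⟩ := ih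
      refine ⟨min η (e a), lt_min h (he a), ?_⟩
      intro φ hφ
      rcases Finset.mem_insert.1 hφ with rfl | hφ
      · exact min_le_right _ _
      · exact (min_le_left _ _).trans (h' _ hφ)
  obtain ⟨η, hη, hη'⟩ := h4 hI.toFinset
  refine ⟨hI.toFinset, η, hη, fun ν hν => hVU (hsub ?_)⟩
  intro φ hφ
  apply hes
  have := hν φ (hI.mem_toFinset.2 hφ)
  rw [Metric.mem_closedBall, Real.dist_eq]
  exact this.trans (hη' φ (hI.mem_toFinset.2 hφ))

lemma aux_greedy {X ι : Type*} [MeasurableSpace X] (μ : Measure X) [IsProbabilityMeasure μ]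
    (I : Finset ι) (v : ι → X → ℝ) (B : ℝ) (hB : ∀ i ∈ I, ∀ x, |v i x| ≤ B)
    (hint : ∀ i ∈ I, Integrable (v i) μ) (h0 : ∀ i ∈ I, ∫ x, v i x ∂μ = 0) (p : ℕ) :
    ∃ x : ℕ → X, ∑ i ∈ I, (∑ k ∈ Finset.range p, v i (x k)) ^ 2 ≤ p * (I.card * B ^ 2) := by
  induction p with
  | zero =>
    obtain ⟨x⟩ : Nonempty X := by
      by_contra h
      rw [not_nonempty_iff] at h
      exact (IsProbabilityMeasure.ne_zero μ) (Measure.eq_zero_of_isEmpty μ)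
    exact ⟨fun _ => x, by simp⟩
  | succ p ih =>
    obtain ⟨x, hx⟩ := ih
    set S : ι → ℝ := fun i => ∑ k ∈ Finset.range p, v i (x k) with hS
    have hI : Integrable (fun y => ∑ i ∈ I, S i * v i y) μ :=
      integrable_finsetSum _ fun i hi => (hint i hi).const_mul _
    obtain ⟨y, hy⟩ := exists_le_integral hI
    have h1 : ∫ y, ∑ i ∈ I, S i * v i y ∂μ = 0 := by
      rw [integral_finsetSum _ fun i hi => (hint i hi).const_mul _]
      refine Finset.sum_eq_zero fun i hi => ?_
      rw [integral_const_mul, h0 i hi, mul_zero]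
    rw [h1] at hy
    refine ⟨fun k => if k = p then y else x k, ?_⟩
    have h2 : ∀ i ∈ I, (∑ k ∈ Finset.range (p+1), v i (if k = p then y else x k)) = S i + v i y := by
      intro i _
      rw [Finset.sum_range_succ, if_pos rfl]
      congr 1
      refine Finset.sum_congr rfl fun k hk => ?_
      rw [if_neg (Finset.mem_range.1 hk).ne]
    have h3 : ∀ i ∈ I, (∑ k ∈ Finset.range (p+1), v i (if k = p then y else x k)) ^ 2
        ≤ S i ^ 2 + 2 * (S i * v i y) + B ^ 2 := by
      intro i hi
      rw [h2 i hi]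
      have := sq_le_sq' (abs_le.1 (hB i hi y)).1 (abs_le.1 (hB i hi y)).2
      nlinarith
    calc _ ≤ ∑ i ∈ I, (S i ^ 2 + 2 * (S i * v i y) + B ^ 2) := Finset.sum_le_sum h3
      _ = ∑ i ∈ I, S i ^ 2 + 2 * ∑ i ∈ I, (S i * v i y) + I.card * B ^ 2 := by
        rw [Finset.sum_add_distrib, Finset.sum_add_distrib, Finset.mul_sum, Finset.sum_const,
          nsmul_eq_mul]
      _ ≤ _ := by push_cast; linarith

lemma aux_periodic_sum (F : ℕ → ℝ) (p : ℕ) (hF : ∀ k, F (k + p) = F k) (a : ℕ) :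
    ∑ k ∈ Finset.range p, F (a + k) = ∑ k ∈ Finset.range p, F k := by
  induction a with
  | zero => simp
  | succ a ih =>
    rw [← ih]
    have h1 := Finset.sum_range_succ (fun k => F (a + k)) p
    have h2 := Finset.sum_range_succ' (fun k => F (a + k)) p
    have h3 : ∑ k ∈ Finset.range p, F (a + 1 + k) = ∑ k ∈ Finset.range p, F (a + (k + 1)) :=
      Finset.sum_congr rfl fun k _ => by congr 1; ring
    rw [h3]
    have := hF a
    simp only [add_zero] at h2
    linarith

lemma aux_find (s : ℕ → ℕ) (h0 : s 0 = 0) (hs : StrictMono s) (T : ℕ) :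
    ∃ a, s a ≤ T ∧ T < s (a + 1) := by
  classical
  have h : ∃ b, T < s b := ⟨T + 1, (Nat.lt_succ_self T).trans_le hs.le_apply⟩
  have h1 := Nat.find_spec h
  have h2 : Nat.find h ≠ 0 := by
    intro h3
    rw [h3, h0] at h1
    omega
  obtain ⟨a, ha⟩ := Nat.exists_eq_succ_of_ne_zero h2
  refine ⟨a, ?_, ?_⟩
  · have := Nat.find_min h (m := a) (by omega)
    omega
  · rw [ha] at h1; exact h1

lemma aux_window (g : ℕ → ℝ) (B : ℝ) (hB : ∀ T, |g T| ≤ B) (s : ℕ → ℕ) (h0 : s 0 = 0)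
    (n : ℕ) (hn : 0 < n) (δ : ℝ) (hδ1 : δ ≤ 1) (hs1 : ∀ k, s k + n ≤ s (k + 1))
    (hs2 : ∀ k, (s (k + 1) : ℝ) ≤ s k + n + δ * n)
    (H : ℕ → ℝ) (E R : ℝ)
    (hE : ∀ k, |∑ T ∈ Finset.range (s (k+1)), g T - ∑ T ∈ Finset.range (s k), g T - H k| ≤ E)
    (p : ℕ) (hR : ∀ a, |∑ k ∈ Finset.range p, H (a + k)| ≤ R) (S : ℕ) :
    |∑ j ∈ Finset.range (p * n), g (S + j)| ≤ p * E + R + B * (4 * n + δ * p * n) := by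
  have hmono : StrictMono s := strictMono_nat_of_lt_succ fun k => by have := hs1 k; omega
  obtain ⟨a, ha1, ha2⟩ := aux_find s h0 hmono S
  set G : ℕ → ℝ := fun u => ∑ T ∈ Finset.range u, g T with hG
  have hL1 : ∀ u w, |G (u + w) - G u| ≤ B * w := by
    intro u w
    simp only [hG]
    rw [Finset.sum_range_add, add_sub_cancel_left]
    calc _ ≤ ∑ j ∈ Finset.range w, |g (u + j)| := Finset.abs_sum_le_sum_abs _ _
      _ ≤ ∑ j ∈ Finset.range w, B := Finset.sum_le_sum fun _ _ => hB _
      _ = _ := by simp [mul_comm]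
  have hB0 : 0 ≤ B := (abs_nonneg _).trans (hB 0)
  have hL : ∀ u w : ℕ, |G u - G w| ≤ B * |(u:ℝ) - w| := by
    intro u w
    rcases le_total w u with h | h
    · obtain ⟨d, rfl⟩ := Nat.exists_eq_add_of_le h
      have := hL1 w d
      simpa using this
    · obtain ⟨d, rfl⟩ := Nat.exists_eq_add_of_le h
      have := hL1 u d
      rw [abs_sub_comm]
      simpa using this
  have hsum : ∑ j ∈ Finset.range (p * n), g (S + j) = G (S + p * n) - G S := by
    simp only [hG]; rw [Finset.sum_range_add, add_sub_cancel_left]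
  have htel : ∀ q : ℕ, |G (s (a + q)) - G (s a) - ∑ k ∈ Finset.range q, H (a + k)| ≤ q * E := by
    intro q
    induction q with
    | zero => simp
    | succ q ih =>
      have h := hE (a + q)
      rw [Finset.sum_range_succ]
      rw [abs_le] at *
      push_cast
      rw [← add_assoc]
      constructor <;> simp only [hG] at * <;> linarith [h.1, h.2, ih.1, ih.2]
  have hlen1 : ∀ q : ℕ, s a + q * n ≤ s (a + q) := by
    intro q
    induction q with
    | zero => simp
    | succ q ih => have := hs1 (a + q); rw [← add_assoc]; nlinarith
  have hlen2 : ∀ q : ℕ, (s (a + q) : ℝ) ≤ s a + q * n + δ * q * n := by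
    intro q
    induction q with
    | zero => simp
    | succ q ih => have := hs2 (a + q); rw [← add_assoc]; push_cast; nlinarith
  have h1 := hlen1 p
  have h1' : (s a : ℝ) + p * n ≤ s (a + p) := by exact_mod_cast h1
  have h2 := hlen2 p
  have h3 := hs2 a
  have ha1' : (s a : ℝ) ≤ S := by exact_mod_cast ha1
  have ha2' : (S : ℝ) ≤ s (a + 1) := by exact_mod_cast ha2.le
  have hn' : (0 : ℝ) < n := by exact_mod_cast hn
  have hδn : δ * n ≤ n := by nlinarith
  have e1 : |(S : ℝ) - s a| ≤ 2 * n := by rw [abs_le]; constructor <;> linarith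
  have e2 : |((S + p * n : ℕ) : ℝ) - s (a + p)| ≤ 2 * n + δ * p * n := by
    push_cast
    rw [abs_le]; constructor <;> linarith
  have f1 := (hL S (s a)).trans (mul_le_mul_of_nonneg_left e1 hB0)
  have f2 := (hL (S + p * n) (s (a + p))).trans (mul_le_mul_of_nonneg_left e2 hB0)
  have f3 := htel p
  have f4 := hR a
  rw [hsum]
  rw [abs_le] at *
  constructor <;> linarith [f1.1, f1.2, f2.1, f2.2, f3.1, f3.2, f4.1, f4.2]

lemma aux_count (n r : ℕ) (θ K : ℝ) (hθ : 0 < θ) (hθ1 : θ ≤ 1) :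
    (Nat.card {w : Fin n → Option (Fin r) //
      (((Finset.univ.filter fun j => w j ≠ none).card : ℕ) : ℝ) ≤ K} : ℝ)
      ≤ θ ^ (-K) * (1 + r * θ) ^ n := by
  classical
  rw [Nat.card_eq_fintype_card, Fintype.card_subtype]
  have h1 : (1 + r * θ) ^ n = ∑ w : Fin n → Option (Fin r),
      θ ^ (Finset.univ.filter fun j => w j ≠ none).card := by
    have h := Finset.prod_univ_sum (fun _ : Fin n => (Finset.univ : Finset (Option (Fin r))))
      (fun _ o => if o ≠ none then θ else 1)
    have h2 : ∑ o : Option (Fin r), (if o ≠ none then θ else 1) = 1 + r * θ := by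
      rw [Fintype.sum_option]; simp
    rw [h2] at h
    simp only [Finset.prod_const, Finset.card_univ, Fintype.card_fin, Fintype.piFinset_univ] at h
    rw [h]
    refine Finset.sum_congr rfl fun w _ => ?_
    rw [Finset.prod_ite]; simp
  rw [h1, Finset.mul_sum, Finset.card_eq_sum_ones, Nat.cast_sum]
  calc _ ≤ ∑ w ∈ Finset.univ.filter (fun w : Fin n → Option (Fin r) =>
        (((Finset.univ.filter fun j => w j ≠ none).card : ℕ) : ℝ) ≤ K),
        θ ^ (-K) * θ ^ (Finset.univ.filter fun j => w j ≠ none).card := by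
        refine Finset.sum_le_sum fun w hw => ?_
        rw [← Real.rpow_natCast, ← Real.rpow_add hθ]
        have := (Finset.mem_filter.1 hw).2
        push_cast
        exact Real.one_le_rpow_of_pos_of_le_one_of_nonpos hθ hθ1 (by linarith)
    _ ≤ _ := Finset.sum_le_sum_of_subset_of_nonneg (Finset.filter_subset _ _)
        fun _ _ _ => by positivity

lemma aux_ent_s6 {X : Type*} [MetricSpace X] [CompactSpace X]
    (f : X → X) (hf : Continuous f) (ε β : ℝ) (z : X) (W : Type) [Fintype W]
    (code : ℕ → W) (n : ℕ) (hn : 0 < n)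
    (hcode : ∀ s s', code s = code s' → ∀ j < n, dist (f^[s + j] z) (f^[s' + j] z) ≤ ε)
    (hβ : Real.log (Fintype.card W) / n < β)
    (hinv : f '' closure (range fun s => f^[s] z) ⊆ closure (range fun s => f^[s] z)) :
    entScale f (closure (range fun s => f^[s] z)) ε < (β : EReal) := by
  classical
  set Λ := closure (range fun s => f^[s] z) with hΛ
  -- every point of Λ belongs to the closure of some class
  have hcov : ∀ y : X, ∃ w : W, y ∈ Λ → y ∈ closure ((fun s => f^[s] z) '' (code ⁻¹' {w})) := by
    intro y
    by_cases hy : y ∈ Λ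
    · have : (range fun s => f^[s] z) = ⋃ w : W, (fun s => f^[s] z) '' (code ⁻¹' {w}) := by
        ext x
        simp
      rw [hΛ, this, closure_iUnion_of_finite] at hy
      obtain ⟨w, hw⟩ := mem_iUnion.1 hy
      exact ⟨w, fun _ => hw⟩
    · exact ⟨code 0, fun h => absurd h hy⟩
  choose cd hcd using hcov
  have hit : ∀ j, Continuous (f^[j]) := fun j => hf.iterate j
  have hclose : ∀ y ∈ Λ, ∀ y' ∈ Λ, cd y = cd y' → ∀ j < n, dist (f^[j] y) (f^[j] y') ≤ ε := by
    intro y hy y' hy' h j hj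
    have h1 := hcd y hy
    have h2 := hcd y' hy'
    rw [← h] at h2
    set A := (fun s => f^[s] z) '' (code ⁻¹' {cd y})
    have hA : ∀ q ∈ A ×ˢ A, dist (f^[j] q.1) (f^[j] q.2) ≤ ε := by
      rintro ⟨_, _⟩ ⟨⟨s, hs, rfl⟩, ⟨s', hs', rfl⟩⟩
      have := hcode s s' (by simp at hs hs'; rw [hs, hs']) j hj
      rw [add_comm s, add_comm s', Function.iterate_add_apply, Function.iterate_add_apply] at this
      exact this
    have hcl : IsClosed {q : X × X | dist (f^[j] q.1) (f^[j] q.2) ≤ ε} :=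
      isClosed_le (by have := hit j; fun_prop) continuous_const
    have hmem : (y, y') ∈ closure (A ×ˢ A) := by rw [closure_prod_eq]; exact ⟨h1, h2⟩
    exact closure_minimal hA hcl hmem
  have hinv' : ∀ j, ∀ y ∈ Λ, f^[j] y ∈ Λ := by
    intro j
    induction j with
    | zero => simp
    | succ j ih => intro y hy; rw [Function.iterate_succ_apply']; exact hinv ⟨_, ih y hy, rfl⟩
  have hsep : ∀ N, sepNum f Λ N ε ≤ Fintype.card W ^ (N / n + 1) := by
    intro N
    refine csSup_le' ?_
    rintro c ⟨S, hSΛ, rfl, hS⟩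
    let Φ : X → (Fin (N / n + 1) → W) := fun y i => cd (f^[i * n] y)
    have : S.card ≤ (Finset.univ : Finset (Fin (N / n + 1) → W)).card := by
      refine Finset.card_le_card_of_injOn Φ (fun _ _ => Finset.mem_coe.2 (Finset.mem_univ _)) ?_
      intro y hy y' hy' hyy
      by_contra hne
      obtain ⟨j, hj, hd⟩ := hS y hy y' hy' hne
      have hi : j / n < N / n + 1 := Nat.lt_succ_of_le (Nat.div_le_div_right hj.le)
      have h1 := congrFun hyy ⟨j / n, hi⟩
      have h2 := hclose _ (hinv' (j / n * n) y (hSΛ hy)) _ (hinv' (j / n * n) y' (hSΛ hy')) h1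
        (j % n) (Nat.mod_lt _ hn)
      rw [← Function.iterate_add_apply, ← Function.iterate_add_apply, mul_comm, Nat.mod_add_div] at h2
      linarith
    simpa using this
  set L := Real.log (Fintype.card W) with hL
  have hW : 1 ≤ Fintype.card W := Fintype.card_pos_iff.2 ⟨code 0⟩
  have hL0 : 0 ≤ L := Real.log_natCast_nonneg _
  obtain ⟨c, hc1, hc2⟩ := exists_between hβ
  have hev : ∀ᶠ N : ℕ in atTop, ((Real.log (sepNum f Λ N ε) / N : ℝ) : EReal) ≤ (c : EReal) := by
    have ht : Tendsto (fun N : ℕ => L / n + L / N) atTop (𝓝 (L / n + 0)) :=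
      tendsto_const_nhds.add (tendsto_const_div_atTop_nhds_zero_nat L)
    rw [add_zero] at ht
    filter_upwards [ht.eventually_lt_const hc1, eventually_gt_atTop 0] with N hN hN0
    rw [EReal.coe_le_coe_iff]
    refine le_trans ?_ hN.le
    have hN0' : (0 : ℝ) < N := by exact_mod_cast hN0
    have hn' : (0 : ℝ) < n := by exact_mod_cast hn
    have h1 : Real.log (sepNum f Λ N ε) ≤ ((N / n : ℕ) + 1) * L := by
      rcases Nat.eq_zero_or_pos (sepNum f Λ N ε) with h0 | h0
      · rw [h0]; simp; positivity
      · have h2 : ((sepNum f Λ N ε : ℕ) : ℝ) ≤ (Fintype.card W : ℝ) ^ (N / n + 1) := by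
          exact_mod_cast hsep N
        have := Real.log_le_log (by exact_mod_cast h0) h2
        rw [Real.log_pow] at this
        push_cast at this ⊢
        exact this
    have h3 : ((N / n : ℕ) : ℝ) ≤ N / n := Nat.cast_div_le
    rw [div_le_iff₀ hN0']
    calc _ ≤ _ := h1
      _ ≤ (N / n + 1) * L := by gcongr
      _ = _ := by field_simp
  refine lt_of_le_of_lt (limsup_le_of_le (by isBoundedDefault) hev) ?_
  exact_mod_cast hc2

lemma aux_bad {X : Type*} [MetricSpace X] (f : X → X) (z : X) (C : ℕ → X) (s : ℕ → ℕ) (n : ℕ)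
    (δ ε' : ℝ) (hs1 : ∀ k, s k + n ≤ s (k + 1))
    (hs2 : ∀ k, (s (k + 1) : ℝ) ≤ s k + n + δ * n)
    (hT : ∀ k, (((Finset.range n).filter
      (fun j => ε' < dist (f^[s k + j] z) (f^[j] (C k)))).card : ℝ) ≤ δ * n) (a : ℕ) :
    (((Finset.Ico (s a) (s (a + 1))).filter (fun T => ¬ (T - s a < n ∧
      dist (f^[T] z) (f^[T - s a] (C a)) ≤ ε'))).card : ℝ) ≤ 2 * δ * n := by
  classical
  have hsub : ((Finset.Ico (s a) (s (a + 1))).filter (fun T => ¬ (T - s a < n ∧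
      dist (f^[T] z) (f^[T - s a] (C a)) ≤ ε'))) ⊆
      ((Finset.range n).filter
      (fun j => ε' < dist (f^[s a + j] z) (f^[j] (C a)))).image (fun j => s a + j) ∪
      Finset.Ico (s a + n) (s (a + 1)) := by
    intro T hT
    rw [Finset.mem_filter, Finset.mem_Ico] at hT
    obtain ⟨⟨h1, h2⟩, h3⟩ := hT
    rw [Finset.mem_union]
    by_cases h : T - s a < n
    · left
      rw [Finset.mem_image]
      refine ⟨T - s a, ?_, by omega⟩
      rw [Finset.mem_filter, Finset.mem_range]
      refine ⟨h, ?_⟩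
      rw [Nat.add_sub_cancel' h1]
      by_contra h4
      exact h3 ⟨h, not_lt.1 h4⟩
    · right
      rw [Finset.mem_Ico]; omega
  have h1 := (Finset.card_le_card hsub).trans (Finset.card_union_le _ _)
  have h2 := h1.trans (Nat.add_le_add_right Finset.card_image_le _)
  rw [Nat.card_Ico] at h2
  have h3 : ((s (a+1) - (s a + n) : ℕ) : ℝ) ≤ δ * n := by
    rw [Nat.cast_sub (hs1 a)]; push_cast; linarith [hs2 a]
  have h4 := hT a
  have h5 := (Nat.cast_le (α := ℝ)).2 h2
  push_cast at h5
  linarith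

lemma aux_block (g : ℕ → ℝ) (h : ℕ → ℝ) (B e δ : ℝ) (s n s' : ℕ) (he : 0 ≤ e)
    (hs1 : s + n ≤ s') (hs2 : (s' : ℝ) ≤ s + n + δ * n) (hB : ∀ T, |g T| ≤ B)
    (hgh : ∀ j, |g (s + j) - h j| ≤ B) (P : ℕ → Prop) [DecidablePred P]
    (hP : ((((Finset.range n).filter P).card : ℕ) : ℝ) ≤ δ * n)
    (hgood : ∀ j < n, ¬ P j → |g (s + j) - h j| ≤ e) :
    |∑ T ∈ Finset.range s', g T - ∑ T ∈ Finset.range s, g T - ∑ j ∈ Finset.range n, h j|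
      ≤ n * e + 2 * B * (δ * n) := by
  have hB0 : 0 ≤ B := (abs_nonneg _).trans (hB 0)
  obtain ⟨d, rfl⟩ := Nat.exists_eq_add_of_le hs1
  have h1 : ∑ T ∈ Finset.range (s + n + d), g T - ∑ T ∈ Finset.range s, g T
      - ∑ j ∈ Finset.range n, h j = ∑ j ∈ Finset.range n, (g (s + j) - h j)
      + ∑ j ∈ Finset.range d, g (s + n + j) := by
    rw [Finset.sum_range_add, Finset.sum_range_add, Finset.sum_sub_distrib]; ring
  rw [h1]
  have h2 : |∑ j ∈ Finset.range d, g (s + n + j)| ≤ B * (δ * n) := by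
    calc _ ≤ ∑ j ∈ Finset.range d, |g (s + n + j)| := Finset.abs_sum_le_sum_abs _ _
      _ ≤ ∑ j ∈ Finset.range d, B := Finset.sum_le_sum fun _ _ => hB _
      _ = B * d := by simp [mul_comm]
      _ ≤ _ := by
        push_cast at hs2
        exact mul_le_mul_of_nonneg_left (by linarith) hB0
  have h3 : |∑ j ∈ Finset.range n, (g (s + j) - h j)| ≤ n * e + B * (δ * n) := by
    calc _ ≤ ∑ j ∈ Finset.range n, |g (s + j) - h j| := Finset.abs_sum_le_sum_abs _ _
      _ ≤ ∑ j ∈ Finset.range n, (e + if P j then B else 0) := by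
        refine Finset.sum_le_sum fun j hj => ?_
        split_ifs with hp
        · linarith [hgh j]
        · linarith [hgood j (Finset.mem_range.1 hj) hp]
      _ = n * e + B * ((Finset.range n).filter P).card := by
        rw [Finset.sum_add_distrib, ← Finset.sum_filter]; simp [mul_comm]
      _ ≤ _ := by gcongr
  refine (abs_add_le _ _).trans ?_
  linarith

lemma aux_code {X : Type*} [MetricSpace X] (f : X → X) (z : X) (x C : ℕ → X) (p : ℕ) (hp : 0 < p)
    (hC : ∀ k, C k = x (k % p)) (s : ℕ → ℕ) (h0 : s 0 = 0) (n : ℕ) (hn : 0 < n)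
    (δ ε ε' : ℝ) (hδ1 : δ ≤ 1) (hεε : 2 * ε' ≤ ε) (hs1 : ∀ k, s k + n ≤ s (k + 1))
    (hs2 : ∀ k, (s (k + 1) : ℝ) ≤ s k + n + δ * n)
    (hT : ∀ k, (((Finset.range n).filter
      (fun j => ε' < dist (f^[s k + j] z) (f^[j] (C k)))).card : ℝ) ≤ δ * n)
    (r : ℕ) (col : X → Fin r) (hcol : ∀ y y', col y = col y' → dist y y' ≤ ε) :
    ∃ code : ℕ → (Fin p × Fin (2 * n + 1) × Fin (2 * n + 1) × {w : Fin n → Option (Fin r) //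
      (((Finset.univ.filter fun j => w j ≠ none).card : ℕ) : ℝ) ≤ 4 * δ * n}),
      ∀ S S', code S = code S' → ∀ j < n, dist (f^[S + j] z) (f^[S' + j] z) ≤ ε := by
  classical
  have hmono : StrictMono s := strictMono_nat_of_lt_succ fun k => by have := hs1 k; omega
  choose idx hi1 hi2 using aux_find s h0 hmono
  have huniq : ∀ T a, s a ≤ T → T < s (a + 1) → idx T = a := by
    intro T a h1 h2
    have h3 := hmono.lt_iff_lt.1 ((hi1 T).trans_lt h2)
    have h4 := hmono.lt_iff_lt.1 (h1.trans_lt (hi2 T))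
    omega
  have hlen : ∀ a, s (a + 1) ≤ s a + 2 * n := by
    intro a
    have h : (s (a + 1) : ℝ) ≤ s a + 2 * n := by
      have := mul_le_mul_of_nonneg_right hδ1 (Nat.cast_nonneg (α := ℝ) n)
      linarith [hs2 a]
    exact_mod_cast h
  let good : ℕ → ℕ → Prop := fun a T => T - s a < n ∧ dist (f^[T] z) (f^[T - s a] (C a)) ≤ ε'
  let σ : ℕ → Option (Fin r) := fun T => if good (idx T) T then none else some (col (f^[T] z))
  have hσ : ∀ T, σ T ≠ none → ¬ good (idx T) T := by
    intro T h1 h2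
    exact h1 (if_pos h2)
  have hcount : ∀ S, (((Finset.univ.filter fun j : Fin n => σ (S + j) ≠ none).card : ℕ) : ℝ)
      ≤ 4 * δ * n := by
    intro S
    set a := idx S with ha
    have hb1 := aux_bad f z C s n δ ε' hs1 hs2 hT a
    have hb2 := aux_bad f z C s n δ ε' hs1 hs2 hT (a + 1)
    have hle : (Finset.univ.filter fun j : Fin n => σ (S + j) ≠ none).card ≤
        (((Finset.Ico (s a) (s (a + 1))).filter (fun T => ¬ good a T)) ∪
        ((Finset.Ico (s (a+1)) (s (a + 1 + 1))).filter (fun T => ¬ good (a+1) T))).card := by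
      refine Finset.card_le_card_of_injOn (fun j => S + (j : ℕ)) ?_ ?_
      · intro j hj
        have hj' := hσ _ (Finset.mem_filter.1 (Finset.mem_coe.1 hj)).2
        rw [Finset.mem_coe, Finset.mem_union, Finset.mem_filter, Finset.mem_filter,
          Finset.mem_Ico, Finset.mem_Ico]
        beta_reduce
        have e1 := hi1 S
        have e2 := hi2 S
        have e3 := hs1 (a + 1)
        have e4 := j.2
        rw [← ha] at e1 e2
        by_cases h : S + (j : ℕ) < s (a + 1)
        · left
          rw [huniq (S + j) a (by omega) h] at hj'
          exact ⟨⟨by omega, h⟩, hj'⟩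
        · right
          rw [huniq (S + j) (a + 1) (by omega) (by omega)] at hj'
          exact ⟨⟨by omega, by omega⟩, hj'⟩
      · intro j _ j' _ h
        simp only [Nat.add_left_cancel_iff] at h
        exact Fin.ext h
    have h5 := (Nat.cast_le (α := ℝ)).2 (hle.trans (Finset.card_union_le _ _))
    push_cast at h5
    simp only [good] at h5
    linarith
  refine ⟨fun S => (⟨idx S % p, Nat.mod_lt _ hp⟩,
    ⟨S - s (idx S), by have := hlen (idx S); have := hi2 S; omega⟩,
    ⟨s (idx S + 1) - S, by have := hlen (idx S); have := hi1 S; omega⟩,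
    ⟨fun j => σ (S + j), hcount S⟩), ?_⟩
  intro S S' heq j hj
  simp only [Prod.mk.injEq, Fin.mk.injEq, Subtype.mk.injEq] at heq
  obtain ⟨q1, q2, q3, q4⟩ := heq
  have q5 : σ (S + j) = σ (S' + j) := congrFun q4 ⟨j, hj⟩
  by_cases hg : good (idx (S + j)) (S + j)
  · have hg' : good (idx (S' + j)) (S' + j) := by
      by_contra hg'
      simp only [σ, if_pos hg, if_neg hg'] at q5
      simp at q5
    have d1 := hg.2
    have d2 := hg'.2
    have key : f^[S + j - s (idx (S + j))] (C (idx (S + j)))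
        = f^[S' + j - s (idx (S' + j))] (C (idx (S' + j))) := by
      have e1 := hi1 S
      have e2 := hi2 S
      have e3 := hs1 (idx S + 1)
      have e1' := hi1 S'
      have e2' := hi2 S'
      have e3' := hs1 (idx S' + 1)
      by_cases h : S + j < s (idx S + 1)
      · rw [huniq (S + j) (idx S) (by omega) h, huniq (S' + j) (idx S') (by omega) (by omega),
          hC, hC, q1]
        congr 1; omega
      · rw [huniq (S + j) (idx S + 1) (by omega) (by omega),
          huniq (S' + j) (idx S' + 1) (by omega) (by omega), hC, hC]
        have : (idx S + 1) % p = (idx S' + 1) % p := Nat.ModEq.add_right 1 q1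
        rw [this]
        congr 1; omega
    rw [key] at d1
    have := dist_triangle_right (f^[S + j] z) (f^[S' + j] z)
      (f^[S' + j - s (idx (S' + j))] (C (idx (S' + j))))
    linarith
  · have hg' : ¬ good (idx (S' + j)) (S' + j) := by
      intro hg'
      simp only [σ, if_pos hg', if_neg hg] at q5
      simp at q5
    simp only [σ, if_neg hg, if_neg hg', Option.some.injEq] at q5
    exact hcol _ _ q5

lemma aux_int_iter {X : Type*} [MetricSpace X] [CompactSpace X] [MeasurableSpace X] [BorelSpace X]
    (f : X → X) (hf : Continuous f) (ν : Measure X) (hν : Measure.map f ν = ν)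
    (φ : X →ᵇ ℝ) (j : ℕ) : ∫ x, φ (f^[j] x) ∂ν = ∫ x, φ x ∂ν := by
  have hmp : MeasurePreserving f ν ν := ⟨hf.measurable, hν⟩
  have h := hmp.iterate j
  conv_rhs => rw [← h.map_eq]
  rw [integral_map h.aemeasurable φ.continuous.aestronglyMeasurable]

lemma aux_integrable_s6 {X : Type*} [MetricSpace X] [CompactSpace X] [MeasurableSpace X]
    [BorelSpace X] (f : X → X) (hf : Continuous f) (ν : Measure X) [IsProbabilityMeasure ν]
    (φ : X →ᵇ ℝ) (j : ℕ) : Integrable (fun x => φ (f^[j] x)) ν :=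
  (φ.compContinuous ⟨f^[j], hf.iterate j⟩).integrable ν

lemma aux_int_sum {X : Type*} [MetricSpace X] [CompactSpace X] [MeasurableSpace X] [BorelSpace X]
    (f : X → X) (hf : Continuous f) (ν : Measure X) [IsProbabilityMeasure ν]
    (hν : Measure.map f ν = ν) (φ : X →ᵇ ℝ) (c : ℝ) (N : ℕ) :
    Integrable (fun x => ∑ j ∈ Finset.range N, (φ (f^[j] x) - c)) ν ∧
    ∫ x, ∑ j ∈ Finset.range N, (φ (f^[j] x) - c) ∂ν = N * (∫ x, φ x ∂ν - c) := by
  have h : ∀ j ∈ Finset.range N, Integrable (fun x => φ (f^[j] x) - c) ν := fun j _ =>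
    (aux_integrable_s6 f hf ν φ j).sub (integrable_const c)
  refine ⟨integrable_finsetSum _ h, ?_⟩
  rw [integral_finsetSum _ h]
  have : ∀ j ∈ Finset.range N, ∫ x, (φ (f^[j] x) - c) ∂ν = ∫ x, φ x ∂ν - c := by
    intro j _
    rw [integral_sub (aux_integrable_s6 f hf ν φ j) (integrable_const c), aux_int_iter f hf ν hν]
    simp
  rw [Finset.sum_congr rfl this, Finset.sum_const, Finset.card_range, nsmul_eq_mul]

lemma aux_meas {X : Type*} [MetricSpace X] [CompactSpace X] [MeasurableSpace X] [BorelSpace X]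
    (f : X → X) (hf : Continuous f) (ν : Measure X) [IsProbabilityMeasure ν]
    (hν : Measure.map f ν = ν) (φ : X →ᵇ ℝ) (c η : ℝ) (N : ℕ) (hN : 0 < N) (Λ : Set X)
    (hΛ : MeasurableSet Λ) (hνΛ : ν Λ = 1)
    (h : ∀ y ∈ Λ, |∑ j ∈ Finset.range N, (φ (f^[j] y) - c)| ≤ N * η) :
    |∫ x, φ x ∂ν - c| ≤ η := by
  have hae : ∀ᵐ y ∂ν, ‖∑ j ∈ Finset.range N, (φ (f^[j] y) - c)‖ ≤ N * η := by
    have : ∀ᵐ y ∂ν, y ∈ Λ := (prob_compl_eq_zero_iff hΛ).2 hνΛ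
    filter_upwards [this] with y hy using h y hy
  have h1 := norm_integral_le_of_norm_le_const hae
  rw [(aux_int_sum f hf ν hν φ c N).2] at h1
  have hN' : (0 : ℝ) < N := by exact_mod_cast hN
  simp only [Real.norm_eq_abs, abs_mul, Nat.abs_cast, probReal_univ, mul_one] at h1
  exact le_of_mul_le_mul_left h1 hN'

lemma aux_cover {X : Type*} [MetricSpace X] [CompactSpace X] (ε : ℝ) (hε : 0 < ε) :
    ∃ (r : ℕ) (col : X → Fin r), ∀ y y', col y = col y' → dist y y' ≤ ε := by
  obtain ⟨t, -, ht, hcov⟩ := finite_cover_balls_of_compact (isCompact_univ (X := X)) (half_pos hε)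
  have h : ∀ y : X, ∃ c : t, dist y c < ε / 2 := by
    intro y
    have := hcov (mem_univ y)
    simp only [mem_iUnion, Metric.mem_ball] at this
    obtain ⟨c, hc, hd⟩ := this
    exact ⟨⟨c, hc⟩, hd⟩
  choose col hcol using h
  have := ht.to_subtype
  obtain ⟨r, ⟨e⟩⟩ := Finite.exists_equiv_fin t
  refine ⟨r, fun y => e (col y), fun y y' hyy => ?_⟩
  have h1 := hcol y
  have h2 := hcol y'
  rw [← e.injective hyy] at h2
  have := dist_triangle_right y y' (col y : X)
  linarith

lemma aux_unif_s6 {X : Type*} [MetricSpace X] [CompactSpace X] (I : Finset (X →ᵇ ℝ)) (η ε : ℝ)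
    (hη : 0 < η) (hε : 0 < ε) : ∃ e : ℝ, 0 < e ∧ e ≤ ε ∧
      ∀ φ ∈ I, ∀ y y' : X, dist y y' ≤ e → |φ y - φ y'| ≤ η := by
  classical
  induction I using Finset.induction_on with
  | empty => exact ⟨ε, hε, le_rfl, by simp⟩
  | insert a J _ ih =>
    obtain ⟨e, he, hee, h⟩ := ih
    obtain ⟨d, hd, h'⟩ := Metric.uniformContinuous_iff.1
      (CompactSpace.uniformContinuous_of_continuous a.continuous) η hη
    refine ⟨min e (d / 2), lt_min he (half_pos hd), (min_le_left _ _).trans hee, ?_⟩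
    intro φ hφ y y' hyy
    rcases Finset.mem_insert.1 hφ with rfl | hφ
    · have := h' (a := y) (b := y') (by have := min_le_right e (d / 2); linarith)
      rw [Real.dist_eq] at this
      exact this.le
    · exact h φ hφ y y' (hyy.trans (min_le_left _ _))

lemma aux_bound {X : Type*} [MetricSpace X] [CompactSpace X] (I : Finset (X →ᵇ ℝ)) :
    ∃ B : ℝ, 1 ≤ B ∧ ∀ φ ∈ I, ∀ y : X, |φ y| ≤ B := by
  refine ⟨1 + ∑ φ ∈ I, ‖φ‖, ?_, ?_⟩
  · have : 0 ≤ ∑ φ ∈ I, ‖φ‖ := Finset.sum_nonneg fun _ _ => norm_nonneg _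
    linarith
  · intro φ hφ y
    have h1 : ‖φ‖ ≤ ∑ φ ∈ I, ‖φ‖ := Finset.single_le_sum (f := fun φ : X →ᵇ ℝ => ‖φ‖) (fun _ _ => norm_nonneg _) hφ
    have h2 := φ.norm_coe_le_norm y
    rw [Real.norm_eq_abs] at h2
    linarith

lemma aux_large (p : ℕ) (b : ℝ) (hb : 0 < b) :
    ∀ᶠ n : ℕ in atTop, (p : ℝ) * (2 * n + 1) ^ 2 ≤ Real.exp (b * n) := by
  have h := (isLittleO_pow_exp_pos_mul_atTop 2 hb).comp_tendsto tendsto_natCast_atTop_atTop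
  have h2 := h.bound (c := 1 / (9 * (p + 1))) (by positivity)
  filter_upwards [h2, eventually_ge_atTop 1] with n hn h1
  have h1' : (1 : ℝ) ≤ n := by exact_mod_cast h1
  simp only [Function.comp, Real.norm_eq_abs, Real.abs_exp, abs_pow, Nat.abs_cast] at hn
  rw [div_mul_eq_mul_div, le_div_iff₀ (by positivity), one_mul] at hn
  refine le_trans ?_ hn
  have hp : (0 : ℝ) ≤ p := Nat.cast_nonneg _
  have : (2 * (n : ℝ) + 1) ^ 2 ≤ 9 * n ^ 2 := by nlinarith
  nlinarith [mul_le_mul_of_nonneg_left this hp, sq_nonneg (n : ℝ)]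

/-- **Proposition 2.4 (entropy denseness).** For a compact system with the approximate
product property: given an invariant probability measure `μ`, a weak-* open
neighborhood `U` of `μ`, and `ε, β > 0`, there is a nonempty compact invariant set
`Λ ⊆ X` such that every invariant probability measure giving full mass to `Λ` lies
in `U`, and `h(Λ, f, ε) < β`. -/
theorem app_entropy_denseness
    {X : Type*} [MetricSpace X] [CompactSpace X] [MeasurableSpace X] [BorelSpace X]
    (f : X → X) (hf : Continuous f) (happ : ApproxProduct f)
    (μ : ProbabilityMeasure X) (hμ : Measure.map f (μ : Measure X) = μ)
    (U : Set (ProbabilityMeasure X)) (hU : IsOpen U) (hμU : μ ∈ U)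
    (ε β : ℝ) (hε : 0 < ε) (hβ : 0 < β) :
    ∃ Λ : Set X, Λ.Nonempty ∧ IsCompact Λ ∧ f '' Λ ⊆ Λ ∧
      (∀ ν : ProbabilityMeasure X, Measure.map f (ν : Measure X) = ν →
        (ν : Measure X) Λ = 1 → ν ∈ U) ∧
      entScale f Λ ε < (β : EReal) := by
  classical
  obtain ⟨I, η, hη, hIU⟩ := aux_nhds μ U hU hμU
  obtain ⟨B, hB1, hB⟩ := aux_bound I
  obtain ⟨ε', hε', hεε, hunif⟩ := aux_unif_s6 I (η / 8) (ε / 2) (by positivity) (by positivity)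
  obtain ⟨r, col, hcol⟩ := aux_cover (X := X) ε hε
  set θ : ℝ := min 1 (β / (4 * (r + 1))) with hθ
  have hθ0 : 0 < θ := lt_min one_pos (by positivity)
  have hθ1 : θ ≤ 1 := min_le_left _ _
  have hrθ : r * θ ≤ β / 4 := by
    have h1 : θ ≤ β / (4 * (r + 1)) := min_le_right _ _
    rw [le_div_iff₀ (by positivity)] at h1
    nlinarith
  have hlogθ : Real.log θ ≤ 0 := Real.log_nonpos hθ0.le hθ1
  obtain ⟨p, hp⟩ := exists_nat_gt (max (16 * B / η) (256 * I.card * B ^ 2 / η ^ 2))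
  have hp1 : 16 * B < p * η := by
    have := (le_max_left _ _).trans_lt hp
    rwa [div_lt_iff₀ hη] at this
  have hp2 : 256 * I.card * B ^ 2 < p * η ^ 2 := by
    have := (le_max_right _ _).trans_lt hp
    rwa [div_lt_iff₀ (by positivity)] at this
  have hp0' : (0 : ℝ) < p := by
    by_contra h
    have : (p : ℝ) * η ≤ 0 := mul_nonpos_of_nonpos_of_nonneg (not_lt.1 h) hη.le
    linarith
  have hp0 : 0 < p := by exact_mod_cast hp0'
  set δ : ℝ := min 1 (min (η / (24 * B)) (β / (16 * (1 - Real.log θ)))) with hδ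
  have hδ0 : 0 < δ := lt_min one_pos (lt_min (by positivity) (div_pos hβ (by linarith)))
  have hδ1 : δ ≤ 1 := min_le_left _ _
  have hδ2 : δ * (24 * B) ≤ η := by
    have : δ ≤ η / (24 * B) := (min_le_right _ _).trans (min_le_left _ _)
    rwa [le_div_iff₀ (by positivity)] at this
  have hδ3 : δ * (16 * (1 - Real.log θ)) ≤ β := by
    have : δ ≤ β / (16 * (1 - Real.log θ)) := (min_le_right _ _).trans (min_le_right _ _)
    rwa [le_div_iff₀ (by linarith)] at this
  obtain ⟨M, hM⟩ := happ δ δ ε' hδ0 hδ0 hε'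
  obtain ⟨n, hnexp, hnM⟩ :=
    ((aux_large p (β / 4) (by positivity)).and (eventually_gt_atTop M)).exists
  have hn : 0 < n := by omega
  have hn' : (0 : ℝ) < n := by exact_mod_cast hn
  have habs : ∀ φ ∈ I, |∫ x, φ x ∂(μ : Measure X)| ≤ B := by
    intro φ hφ
    have h := norm_integral_le_of_norm_le_const (μ := (μ : Measure X)) (f := fun x => φ x)
      (Eventually.of_forall fun x => by rw [Real.norm_eq_abs]; exact hB φ hφ x)
    simpa using h
  have hg2 : ∀ φ ∈ I, ∀ y, |φ y - ∫ x, φ x ∂(μ : Measure X)| ≤ 2 * B := by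
    intro φ hφ y
    have := abs_sub (φ y) (∫ x, φ x ∂(μ : Measure X))
    linarith [hB φ hφ y, habs φ hφ]
  -- choice of the reference points
  obtain ⟨x, hx⟩ := aux_greedy (μ : Measure X) I
    (fun φ y => ∑ j ∈ Finset.range n, (φ (f^[j] y) - ∫ x, φ x ∂(μ : Measure X))) (n * (2 * B))
    (by
      intro φ hφ y
      calc _ ≤ ∑ j ∈ Finset.range n, |φ (f^[j] y) - ∫ x, φ x ∂(μ : Measure X)| :=
            Finset.abs_sum_le_sum_abs _ _
        _ ≤ ∑ j ∈ Finset.range n, 2 * B := Finset.sum_le_sum fun _ _ => hg2 φ hφ _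
        _ = _ := by simp)
    (fun φ _ => (aux_int_sum f hf μ hμ φ _ n).1)
    (fun φ _ => by rw [(aux_int_sum f hf μ hμ φ _ n).2]; simp) p
  have hx' : ∀ φ ∈ I, |∑ k ∈ Finset.range p, ∑ j ∈ Finset.range n,
      (φ (f^[j] (x k)) - ∫ x, φ x ∂(μ : Measure X))| ≤ p * n * (η / 8) := by
    intro φ hφ
    refine abs_le_of_sq_le_sq ?_ (by positivity)
    have h1 := (Finset.single_le_sum (f := fun φ : X →ᵇ ℝ => (∑ k ∈ Finset.range p,
      ∑ j ∈ Finset.range n, (φ (f^[j] (x k)) - ∫ x, φ x ∂(μ : Measure X))) ^ 2)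
      (fun _ _ => sq_nonneg _) hφ).trans hx
    refine h1.trans ?_
    have h2 : (p : ℝ) * (I.card * (n * (2 * B)) ^ 2) =
      (p * n ^ 2 / 64) * (256 * I.card * B ^ 2) := by ring
    have h3 : (p * n * (η / 8)) ^ 2 = (p * n ^ 2 / 64) * (p * η ^ 2) := by ring
    rw [h2, h3]
    exact mul_le_mul_of_nonneg_left hp2.le (by positivity)
  obtain ⟨t, ht0, ht1, z, hz⟩ := hM n hnM (fun k => x (k % p))
  set C : ℕ → X := fun k => x (k % p) with hC
  set s : ℕ → ℕ := segStart (fun _ => n) t with hs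
  have hs0 : s 0 = 0 := by simp [hs, segStart]
  have hss : ∀ k, s (k + 1) = s k + (n + t k - 1) := by
    intro k; simp only [hs, segStart]; rw [Finset.sum_range_succ]
  have hs1 : ∀ k, s k + n ≤ s (k + 1) := by
    intro k; have := hss k; have := ht0 k; omega
  have hs2 : ∀ k, (s (k + 1) : ℝ) ≤ s k + n + δ * n := by
    intro k
    have h1 : s (k + 1) + 1 = s k + n + t k := by have := hss k; have := ht0 k; omega
    have h2 : (s (k + 1) : ℝ) + 1 = s k + n + t k := by exact_mod_cast h1
    linarith [ht1 k]
  have hT : ∀ k, (((Finset.range n).filter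
      (fun j => ε' < dist (f^[s k + j] z) (f^[j] (C k)))).card : ℝ) ≤ δ * n := hz
  have hinv : f '' closure (range fun s => f^[s] z) ⊆ closure (range fun s => f^[s] z) := by
    refine (image_closure_subset_closure_image hf).trans (closure_mono ?_)
    rintro _ ⟨_, ⟨k, rfl⟩, rfl⟩
    exact ⟨k + 1, Function.iterate_succ_apply' f k z⟩
  refine ⟨closure (range fun s => f^[s] z), ⟨z, subset_closure ⟨0, rfl⟩⟩,
    isClosed_closure.isCompact, hinv, ?_, ?_⟩
  · intro ν hν hνΛ
    refine hIU ν fun φ hφ => ?_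
    set c := ∫ x, φ x ∂(μ : Measure X) with hc
    refine aux_meas f hf ν hν φ c η (p * n) (by positivity) _ isClosed_closure.measurableSet
      hνΛ ?_
    have horb : ∀ S, |∑ j ∈ Finset.range (p * n), (φ (f^[S + j] z) - c)| ≤ ((p * n : ℕ) : ℝ) * η := by
      intro S
      have h := aux_window (fun T => φ (f^[T] z) - c) (2 * B) (fun T => hg2 φ hφ _) s hs0 n hn δ
        hδ1 hs1 hs2 (fun k => ∑ j ∈ Finset.range n, (φ (f^[j] (C k)) - c))
        (n * (η / 8) + 2 * (2 * B) * (δ * n)) (p * n * (η / 8))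
        (fun k => aux_block (fun T => φ (f^[T] z) - c) (fun j => φ (f^[j] (C k)) - c) (2 * B)
          (η / 8) δ (s k) n (s (k + 1)) (by positivity) (hs1 k) (hs2 k) (fun T => hg2 φ hφ _)
          (fun j => by
            have := abs_sub (φ (f^[s k + j] z)) (φ (f^[j] (C k)))
            rw [sub_sub_sub_cancel_right]
            linarith [hB φ hφ (f^[s k + j] z), hB φ hφ (f^[j] (C k))])
          (fun j => ε' < dist (f^[s k + j] z) (f^[j] (C k))) (hT k)
          (fun j _ hj => by
            rw [sub_sub_sub_cancel_right]
            exact hunif φ hφ _ _ (not_lt.1 hj)))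
        p
        (fun a => by
          rw [aux_periodic_sum (fun k => ∑ j ∈ Finset.range n, (φ (f^[j] (C k)) - c)) p
            (fun k => by simp [hC]) a]
          have h1 : ∑ k ∈ Finset.range p, ∑ j ∈ Finset.range n, (φ (f^[j] (C k)) - c)
              = ∑ k ∈ Finset.range p, ∑ j ∈ Finset.range n, (φ (f^[j] (x k)) - c) := by
            refine Finset.sum_congr rfl fun k hk => ?_
            simp only [hC, Nat.mod_eq_of_lt (Finset.mem_range.1 hk)]
          rw [h1]
          exact hx' φ hφ) S
      refine h.trans ?_
      have h5 : (p * n : ℝ) * (δ * (24 * B)) ≤ p * n * η :=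
        mul_le_mul_of_nonneg_left hδ2 (by positivity)
      have h6 : (n : ℝ) * (16 * B) ≤ n * (p * η) := mul_le_mul_of_nonneg_left hp1.le hn'.le
      push_cast
      nlinarith
    have hcl : IsClosed {y : X | |∑ j ∈ Finset.range (p * n), (φ (f^[j] y) - c)| ≤
        ((p * n : ℕ) : ℝ) * η} := by
      refine isClosed_le ?_ continuous_const
      refine continuous_abs.comp (continuous_finsetSum _ fun j _ => ?_)
      exact (φ.continuous.comp (hf.iterate j)).sub continuous_const
    refine fun y hy => closure_minimal ?_ hcl hy
    rintro _ ⟨S, rfl⟩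
    have := horb S
    simp only [mem_setOf_eq, ← Function.iterate_add_apply]
    simpa only [add_comm S] using this
  · obtain ⟨code, hcode⟩ := aux_code f z x C p hp0 (fun _ => rfl) s hs0 n hn δ ε ε' hδ1
      (by linarith) hs1 hs2 hT r col hcol
    refine aux_ent_s6 f hf ε β z _ code n hn hcode ?_ hinv
    have hcnt := aux_count n r θ (4 * δ * n) hθ0 hθ1
    rw [Nat.card_eq_fintype_card] at hcnt
    have h1 : θ ^ (-(4 * δ * n)) ≤ Real.exp (β / 4 * n) := by
      rw [Real.rpow_def_of_pos hθ0]
      refine Real.exp_le_exp.2 ?_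
      have := mul_le_mul_of_nonneg_right hδ3 hn'.le
      nlinarith [mul_pos hδ0 hn']
    have h2 : (1 + r * θ) ^ n ≤ Real.exp (β / 4 * n) := by
      calc (1 + r * θ) ^ n ≤ (Real.exp (r * θ)) ^ n := by
            gcongr
            linarith [Real.add_one_le_exp (r * θ)]
        _ = Real.exp (n * (r * θ)) := (Real.exp_nat_mul _ _).symm
        _ ≤ _ := Real.exp_le_exp.2 (by nlinarith)
    rw [div_lt_iff₀ hn']
    have hpos : 0 < Fintype.card (Fin p × Fin (2 * n + 1) × Fin (2 * n + 1) ×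
      {w : Fin n → Option (Fin r) //
      (((Finset.univ.filter fun j => w j ≠ none).card : ℕ) : ℝ) ≤ 4 * δ * n}) :=
      Fintype.card_pos_iff.2 ⟨code 0⟩
    have hle : (Fintype.card (Fin p × Fin (2 * n + 1) × Fin (2 * n + 1) ×
      {w : Fin n → Option (Fin r) //
      (((Finset.univ.filter fun j => w j ≠ none).card : ℕ) : ℝ) ≤ 4 * δ * n}) : ℝ) ≤
      Real.exp (β / 4 * n + (β / 4 * n + β / 4 * n)) := by
      simp only [Fintype.card_prod, Fintype.card_fin]
      rw [Real.exp_add, Real.exp_add]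
      push_cast
      calc _ = ((p : ℝ) * (2 * n + 1) ^ 2) * (Fintype.card {w : Fin n → Option (Fin r) //
            (((Finset.univ.filter fun j => w j ≠ none).card : ℕ) : ℝ) ≤ 4 * δ * n} : ℝ) := by
            ring
        _ ≤ _ := by
          refine mul_le_mul hnexp (hcnt.trans ?_) (Nat.cast_nonneg _) (Real.exp_pos _).le
          exact mul_le_mul h1 h2 (by positivity) (Real.exp_pos _).le
    have h3 := Real.log_le_log (by exact_mod_cast hpos) hle
    rw [Real.log_exp] at h3
    refine h3.trans_lt ?_
    nlinarith [mul_pos hβ hn']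
end Defs
end

section
/- Let (X,d) be a compact metric space and f : X → X a continuous map such that (X,f) has the strict approximate product property. If (X,f) is uniquely ergodic, then (X,f) is minimal. -/
open MeasureTheory Filter Set

section Defs

variable {X : Type*} [MetricSpace X]

open Topology BoundedContinuousFunction in
theorem kb_aux {X : Type*} [MetricSpace X] [CompactSpace X] [MeasurableSpace X] [BorelSpace X]
    (f : X → X) (hf : Continuous f) (z : X) (F : Set X) (hF : IsClosed F) (L : ℕ) (hL : 0 < L)
    (hc : ∀ k : ℕ, ∃ S : Finset ℕ, S ⊆ Finset.range (L * (k+1)) ∧ k + 1 ≤ S.card ∧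
      ∀ i ∈ S, f^[i] z ∈ F) :
    ∃ μ : Measure X, (IsProbabilityMeasure μ ∧ Measure.map f μ = μ) ∧ (L : ENNReal)⁻¹ ≤ μ F := by
  classical
  let ν : ℕ → Measure X := fun k =>
    ((L * (k+1) : ℕ) : ENNReal)⁻¹ • ∑ i ∈ Finset.range (L * (k+1)), Measure.dirac (f^[i] z)
  have hpos : ∀ k : ℕ, 0 < L * (k+1) := fun k => by positivity
  have hν : ∀ k, IsProbabilityMeasure (ν k) := by
    intro k
    constructor
    simp only [ν, Measure.smul_apply, Measure.finsetSum_apply, measure_univ, Finset.sum_const,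
      Finset.card_range, smul_eq_mul, nsmul_eq_mul, mul_one]
    exact ENNReal.inv_mul_cancel (by exact_mod_cast (hpos k).ne') (ENNReal.natCast_ne_top _)
  have hint : ∀ (k : ℕ) (g : X →ᵇ ℝ), ∫ x, g x ∂(ν k) =
      ((L * (k+1) : ℕ) : ℝ)⁻¹ * ∑ i ∈ Finset.range (L * (k+1)), g (f^[i] z) := by
    intro k g
    simp only [ν]
    rw [integral_smul_measure, integral_finsetSum_measure]
    · rw [ENNReal.toReal_inv, ENNReal.toReal_natCast, smul_eq_mul]
      simp only [integral_dirac]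
    · intro i _
      exact g.integrable _
  have hνF : ∀ k, (L : ENNReal)⁻¹ ≤ ν k F := by
    intro k
    obtain ⟨S, hS, hcard, hSF⟩ := hc k
    have h1 : ((k + 1 : ℕ) : ENNReal) ≤
        ∑ i ∈ Finset.range (L * (k+1)), Measure.dirac (f^[i] z) F := by
      calc ((k + 1 : ℕ) : ENNReal) ≤ (S.card : ENNReal) := by exact_mod_cast hcard
        _ = ∑ i ∈ S, Measure.dirac (f^[i] z) F := by
          rw [Finset.sum_congr rfl (g := fun _ => (1 : ENNReal))]
          · simp
          · intro i hi
            rw [Measure.dirac_apply' _ hF.measurableSet]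
            simp [hSF i hi]
        _ ≤ _ := Finset.sum_le_sum_of_subset hS
    simp only [ν, Measure.smul_apply, Measure.finsetSum_apply, smul_eq_mul]
    calc (L : ENNReal)⁻¹ = ((L * (k+1) : ℕ) : ENNReal)⁻¹ * ((k + 1 : ℕ) : ENNReal) := by
          rw [Nat.cast_mul, ENNReal.mul_inv (by simp) (by simp), mul_assoc,
            ENNReal.inv_mul_cancel (by exact_mod_cast (Nat.succ_ne_zero k))
              (ENNReal.natCast_ne_top _), mul_one]
      _ ≤ _ := by gcongr
  let P : ℕ → ProbabilityMeasure X := fun k => ⟨ν k, hν k⟩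
  let U : Ultrafilter ℕ := hyperfilter ℕ
  have hU : (U : Filter ℕ) ≤ atTop := Nat.hyperfilter_le_atTop
  obtain ⟨μ, -, hμ⟩ := isCompact_univ.ultrafilter_le_nhds (U.map P) (by simp)
  have hμ' : Tendsto P U (𝓝 μ) := hμ
  refine ⟨μ, ⟨inferInstance, ?_⟩, ?_⟩
  · have : IsProbabilityMeasure (Measure.map f (μ : Measure X)) :=
      Measure.isProbabilityMeasure_map hf.aemeasurable
    apply ext_of_forall_integral_eq_of_IsFiniteMeasure
    intro g
    rw [integral_map hf.aemeasurable g.continuous.aestronglyMeasurable]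
    rw [ProbabilityMeasure.tendsto_iff_forall_integral_tendsto] at hμ'
    have ha := hμ' (g.compContinuous ⟨f, hf⟩)
    have hb := hμ' g
    have hd := ha.sub hb
    have h0 : Tendsto (fun k : ℕ => ∫ ω, (g.compContinuous ⟨f, hf⟩) ω ∂(P k : Measure X)
        - ∫ ω, g ω ∂(P k : Measure X)) atTop (𝓝 0) := by
      apply squeeze_zero_norm (a := fun k : ℕ => (2 * ‖g‖) * (1 / ((k : ℝ) + 1)))
      · intro k
        change ‖∫ ω, (g.compContinuous ⟨f, hf⟩) ω ∂(ν k) - ∫ ω, g ω ∂(ν k)‖ ≤ _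
        rw [hint, hint, ← mul_sub, ← Finset.sum_sub_distrib]
        have : ∑ i ∈ Finset.range (L * (k+1)),
            ((g.compContinuous ⟨f, hf⟩) (f^[i] z) - g (f^[i] z))
            = g (f^[L * (k+1)] z) - g z := by
          have := Finset.sum_range_sub (fun i => g (f^[i] z)) (L * (k+1))
          simpa [Function.iterate_succ_apply'] using this
        rw [this, norm_mul, mul_comm]
        have h2 : ‖g (f^[L * (k+1)] z) - g z‖ ≤ 2 * ‖g‖ := by
          have := norm_sub_le (g (f^[L * (k+1)] z)) (g z)
          have h3 := g.norm_coe_le_norm (f^[L * (k+1)] z)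
          have h4 := g.norm_coe_le_norm z
          linarith
        have h5 : ‖((L * (k+1) : ℕ) : ℝ)⁻¹‖ ≤ 1 / ((k : ℝ) + 1) := by
          rw [norm_inv, ← one_div, Real.norm_natCast]
          apply one_div_le_one_div_of_le (by positivity)
          have : k + 1 ≤ L * (k+1) := Nat.le_mul_of_pos_left _ hL
          exact_mod_cast this
        gcongr
      · simpa using (tendsto_one_div_add_atTop_nhds_zero_nat (𝕜 := ℝ)).const_mul (2 * ‖g‖)
    have := tendsto_nhds_unique hd (h0.mono_left hU)
    simpa using sub_eq_zero.mp this
  · refine le_trans ?_ (ProbabilityMeasure.limsup_measure_closed_le_of_tendsto hμ' hF)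
    calc (L : ENNReal)⁻¹ = limsup (fun _ : ℕ => (L : ENNReal)⁻¹) (U : Filter ℕ) := by simp
      _ ≤ _ := limsup_le_limsup (Eventually.of_forall hνF)

/-- **Proposition 2.7 (Sun).** A uniquely ergodic compact system with the strict
approximate product property is minimal. -/
theorem sapp_uniquelyErgodic_minimal
    {X : Type*} [MetricSpace X] [CompactSpace X] [MeasurableSpace X] [BorelSpace X]
    (f : X → X) (hf : Continuous f) (hsapp : StrictApproxProduct f)
    (huniq : UniquelyErgodic f) :
    MinimalSystem f := by
  intro x y
  by_contra hy
  set K := closure (Set.range fun n => f^[n] x) with hK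
  obtain ⟨r, hr, hball⟩ := Metric.isOpen_iff.mp isClosed_closure.isOpen_compl y hy
  obtain ⟨M, hM⟩ := hsapp 1 (r/2) one_pos (by positivity)
  obtain ⟨t, ht0, ht, z, hz⟩ := hM (M+1) (Nat.lt_succ_self M) (fun _ => y)
  set n := M + 1 with hn
  have ht' : ∀ k, t k ≤ 1 + n := fun k => by
    have := ht k
    rw [one_mul] at this
    exact_mod_cast this
  have hzF : ∀ k, f^[segStart (fun _ => n) t k] z ∈ Metric.closedBall y (r/2) := by
    intro k
    have h := hz k
    rw [zero_mul] at h
    have h' : ((Finset.range n).filter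
      (fun j => r/2 < dist (f^[segStart (fun _ => n) t k + j] z) (f^[j] y))).card = 0 := by
      exact_mod_cast le_antisymm h (Nat.cast_nonneg _)
    rw [Finset.card_eq_zero, Finset.filter_eq_empty_iff] at h'
    have := h' (x := 0) (by simp [hn])
    simpa using this
  have hsucc : ∀ k, segStart (fun _ => n) t (k+1) = segStart (fun _ => n) t k + (n + t k - 1) :=
    fun k => Finset.sum_range_succ _ _
  have hmono : StrictMono (segStart (fun _ => n) t) := by
    apply strictMono_nat_of_lt_succ
    intro k
    have := hsucc k
    have := ht0 k
    omega
  have hle : ∀ k, segStart (fun _ => n) t k ≤ 2 * n * k := by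
    intro k
    induction k with
    | zero => simp [segStart]
    | succ k ih =>
      have := hsucc k
      have := ht' k
      rw [mul_add]
      omega
  obtain ⟨μ, hμ, hμF⟩ := kb_aux f hf z (Metric.closedBall y (r/2)) Metric.isClosed_closedBall
    (2 * n) (by omega) (fun k => by
      refine ⟨(Finset.range (k+1)).image (segStart (fun _ => n) t), ?_, ?_, ?_⟩
      · intro i hi
        simp only [Finset.mem_image, Finset.mem_range] at hi ⊢
        obtain ⟨j, hj, rfl⟩ := hi
        calc _ ≤ 2 * n * j := hle j
          _ < _ := Nat.mul_lt_mul_of_pos_left hj (by omega)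
      · rw [Finset.card_image_of_injective _ hmono.injective, Finset.card_range]
      · intro i hi
        simp only [Finset.mem_image] at hi
        obtain ⟨j, -, rfl⟩ := hi
        exact hzF j)
  obtain ⟨μ', hμ', hμK⟩ := kb_aux f hf x K isClosed_closure 1 one_pos (fun k =>
    ⟨Finset.range (k+1), by simp, by simp, fun i _ => subset_closure ⟨i, rfl⟩⟩)
  obtain rfl := huniq.unique hμ hμ'
  have := hμ.1
  have hsub : Metric.closedBall y (r/2) ⊆ Kᶜ :=
    (Metric.closedBall_subset_ball (by linarith)).trans hball
  have h0 : μ Kᶜ = 0 := by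
    rw [prob_compl_eq_zero_iff isClosed_closure.measurableSet]
    exact le_antisymm prob_le_one (by simpa using hμK)
  have h1 := hμF.trans ((measure_mono hsub).trans h0.le)
  rw [nonpos_iff_eq_zero, ENNReal.inv_eq_zero] at h1
  exact ENNReal.natCast_ne_top _ h1
end Defs
end
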